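/- Let k ≥ 2 and j ∈ {1,…,k−1}. With high probability, N_{G_p} = ∅ for all p ≥ p_{M_j} simultaneously; that is, for every p ≥ p_{M_j}, every j-cocycle of G_p is generated by copies of M_j^-. -/

import Mathlib

open MeasureTheory Filter

attribute [local instance] Classical.propDecidable

namespace RSC

variable {V : Type*}

/-- `A` is an `i`-dimensional simplex of the complex `G`. -/
def IsSimplex (G : Set (Finset V)) (i : ℕ) (A : Finset V) : Prop :=
  A ∈ G ∧ A.card = i + 1

/-- A `k`-dimensional simplicial complex on vertex set `V`. -/
structure IsKComplex (G : Set (Finset V)) (k : ℕ) : Prop where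
  down : ∀ A ∈ G, ∀ B, B ⊆ A → B.Nonempty → B ∈ G
  singletons : ∀ v : V, ({v} : Finset V) ∈ G
  dim : ∀ A ∈ G, A.card ≤ k + 1

/-- `i`-cochains with `F₂`-coefficients. -/
abbrev Cochain (G : Set (Finset V)) (i : ℕ) : Type _ :=
  {A : Finset V // IsSimplex G i A} → ZMod 2

/-- The coboundary map `δ^i : C^i(G) → C^{i+1}(G)`. -/
noncomputable def coboundary (G : Set (Finset V)) (i : ℕ) :
    Cochain G i →ₗ[ZMod 2] Cochain G (i + 1) where
  toFun f := fun σ => ∑ τ ∈ Finset.powersetCard (i + 1) (σ : Finset V),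
      if h : IsSimplex G i τ then f ⟨τ, h⟩ else 0
  map_add' f g := by
    funext σ
    simp only [Pi.add_apply, ← Finset.sum_add_distrib]
    refine Finset.sum_congr rfl fun τ _ => ?_
    by_cases h : IsSimplex G i τ <;> simp [h]
  map_smul' c f := by
    funext σ
    simp only [Pi.smul_apply, RingHom.id_apply, Finset.smul_sum]
    refine Finset.sum_congr rfl fun τ _ => ?_
    by_cases h : IsSimplex G i τ <;> simp [h]

/-- The submodule of `i`-cocycles. -/
noncomputable def cocycles (G : Set (Finset V)) (i : ℕ) : Submodule (ZMod 2) (Cochain G i) :=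
  LinearMap.ker (coboundary G i)

/-- The submodule of `i`-coboundaries (`δ^{-1}` is the zero map). -/
noncomputable def coboundaries (G : Set (Finset V)) : (i : ℕ) → Submodule (ZMod 2) (Cochain G i)
  | 0 => ⊥
  | (i + 1) => LinearMap.range (coboundary G i)

/-- The `i`-th cohomology group `H^i(G;F₂) = ker δ^i / im δ^{i-1}`. -/
noncomputable abbrev cohomology (G : Set (Finset V)) (i : ℕ) :=
  (cocycles G i) ⧸ ((coboundaries G i).comap (cocycles G i).subtype)

/-- `F₂`-cohomological `j`-connectedness: `H^0 ≅ F₂` and `H^i = 0` for `1 ≤ i ≤ j`. -/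
def CohomConnected (G : Set (Finset V)) (j : ℕ) : Prop :=
  Nonempty (cohomology G 0 ≃ₗ[ZMod 2] ZMod 2) ∧
    ∀ i, 1 ≤ i → i ≤ j → Subsingleton (cohomology G i)

/-- The `j`-flower in `K` with centre `C`: the set of petals `C ∪ {w}`, `w ∈ K \ C`. -/
def Flower [DecidableEq V] (K C : Finset V) : Set (Finset V) :=
  {P | ∃ w ∈ K \ C, P = insert w C}

/-- A copy of `M_j^-`: a `k`-simplex `K` together with a `(j-1)`-simplex `C ⊆ K` such that
each petal of the flower `F(K,C)` is contained in no `k`-simplex other than `K`. -/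
def IsMjMinus [DecidableEq V] (G : Set (Finset V)) (k j : ℕ) (K C : Finset V) : Prop :=
  IsSimplex G k K ∧ C ∈ G ∧ C.card = j ∧ C ⊆ K ∧
    ∀ P ∈ Flower K C, ∀ K', IsSimplex G k K' → P ⊆ K' → K' = K

/-- A `j`-cycle: every `(j-1)`-simplex lies in an even number of members of `J`. -/
def IsCycle (G : Set (Finset V)) (j : ℕ) (J : Finset (Finset V)) : Prop :=
  (∀ σ ∈ J, IsSimplex G j σ) ∧
    ∀ τ : Finset V, τ.card = j → Even (J.filter (fun σ => τ ⊆ σ)).card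

/-- A copy of `M_j`. -/
def IsMj [DecidableEq V] (G : Set (Finset V)) (k j : ℕ) (K C : Finset V)
    (J : Finset (Finset V)) : Prop :=
  IsMjMinus G k j K C ∧ IsCycle G j J ∧ ∃! P : Finset V, P ∈ J ∧ P ∈ Flower K C

/-- A `j`-shell: a `(j+2)`-set all of whose `(j+1)`-subsets are `j`-simplices. -/
def IsShell (G : Set (Finset V)) (j : ℕ) (A : Finset V) : Prop :=
  A.card = j + 2 ∧ ∀ τ ⊆ A, τ.card = j + 1 → τ ∈ G

/-- A copy of `M_j^*`. -/
def IsMjStar [DecidableEq V] (G : Set (Finset V)) (k j : ℕ) (K C : Finset V) (w a : V) : Prop :=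
  IsMjMinus G k j K C ∧ w ∈ K \ C ∧ a ∉ K ∧ IsShell G j (insert a (insert w C))

/-- The support of a cochain. -/
def cochainSupport {G : Set (Finset V)} {i : ℕ} (f : Cochain G i) : Set (Finset V) :=
  {A | ∃ h : IsSimplex G i A, f ⟨A, h⟩ = 1}

/-- A cochain arising from a copy of `M_j^-`: its support is the flower `F(K,C)`. -/
def ArisesFrom [DecidableEq V] (G : Set (Finset V)) (k j : ℕ) (f : Cochain G j)
    (K C : Finset V) : Prop :=
  IsMjMinus G k j K C ∧ cochainSupport f = Flower K C

/-- A `j`-cocycle generated by copies of `M_j^-`: it differs by a `j`-coboundary from a sum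
of `j`-cocycles arising from copies of `M_j^-`. -/
def GeneratedByMjMinus [DecidableEq V] (G : Set (Finset V)) (k j : ℕ) (f : Cochain G j) : Prop :=
  ∃ (m : ℕ) (fs : Fin m → Cochain G j),
    (∀ i, ∃ K C, ArisesFrom G k j (fs i) K C) ∧
      f - (∑ i, fs i) ∈ coboundaries G j

/-- Membership in `N_G`: a `j`-cocycle not generated by copies of `M_j^-`. -/
def InNG [DecidableEq V] (G : Set (Finset V)) (k j : ℕ) (f : Cochain G j) : Prop :=
  f ∈ cocycles G j ∧ ¬ GeneratedByMjMinus G k j f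

/-- Traversability: the transitive closure of "lying in a common `k`-simplex" is `S × S`. -/
def Traversable (G : Set (Finset V)) (k : ℕ) (S : Set (Finset V)) : Prop :=
  ∀ σ₁ ∈ S, ∀ σ₂ ∈ S,
    Relation.TransGen
      (fun a b => a ∈ S ∧ b ∈ S ∧ ∃ K, IsSimplex G k K ∧ a ⊆ K ∧ b ⊆ K) σ₁ σ₂

/-- A local obstacle: a `k`-simplex containing at least `k-j+1` many `j`-simplices,
each lying in no other `k`-simplex. -/
def IsLocalObstacle (G : Set (Finset V)) (k j : ℕ) (K : Finset V) : Prop :=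
  IsSimplex G k K ∧
    k - j + 1 ≤ {σ : Finset V | IsSimplex G j σ ∧ σ ⊆ K ∧
      ∀ K', IsSimplex G k K' → σ ⊆ K' → K' = K}.ncard

/-- The random complex `G_p` given birth times `t`: all singletons together with all
non-empty subsets of `(k+1)`-sets with birth time at most `p`. -/
def complexAt (k n : ℕ) (t : Finset (Fin n) → ℝ) (p : ℝ) : Set (Finset (Fin n)) :=
  {A | (∃ v, A = {v}) ∨
    (A.Nonempty ∧ ∃ K : Finset (Fin n), K.card = k + 1 ∧ t K ≤ p ∧ A ⊆ K)}

/-- The distribution of birth times: i.i.d. uniform on `[0,1]`. -/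
noncomputable def birthMeasure (n : ℕ) : Measure (Finset (Fin n) → ℝ) :=
  Measure.pi fun _ => volume.restrict (Set.Icc (0 : ℝ) 1)

/-- `p_{M_j}`: the supremum of the probabilities `p ∈ [0,1]` at which `G_p` contains
a copy of `M_j`. -/
noncomputable def pMj (k j n : ℕ) (t : Finset (Fin n) → ℝ) : ℝ :=
  sSup {p : ℝ | p ∈ Set.Icc (0 : ℝ) 1 ∧
    ∃ K C J, IsMj (complexAt k n t p) k j K C J}

/-- The threshold `p_j`. -/
noncomputable def pjThreshold (k j n : ℕ) : ℝ :=
  ((j + 1 : ℝ) * Real.log n + Real.log (Real.log n)) * (Nat.factorial (k - j)) /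
    (((k - j + 1 : ℕ) : ℝ) * (n : ℝ) ^ (k - j))

/-- `p_j^-`. -/
noncomputable def pjMinus (k j n : ℕ) : ℝ :=
  (1 - 1 / Real.sqrt (Real.log n)) * ((j + 1 : ℝ) * Real.log n) * (Nat.factorial (k - j)) /
    (((k - j + 1 : ℕ) : ℝ) * (n : ℝ) ^ (k - j))

/-- `p_{j-1}^-`. -/
noncomputable def pjPrevMinus (k j n : ℕ) : ℝ :=
  (1 - 1 / Real.sqrt (Real.log n)) * ((j : ℝ) * Real.log n) * (Nat.factorial (k - j + 1)) /
    (((k - j + 2 : ℕ) : ℝ) * (n : ℝ) ^ (k - j + 1))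

/-- `p_j^{(1)}`. -/
noncomputable def pjOne (k j n : ℕ) : ℝ :=
  1 / (10 * ((j : ℝ) + 1) * (Nat.choose (k + 1) (j + 1)) * (n : ℝ) ^ (k - j))

/-- The number of copies of `M_j^-` in `G`. -/
noncomputable def countMjMinus (k j : ℕ) {n : ℕ} (G : Set (Finset (Fin n))) : ℕ :=
  {x : Finset (Fin n) × Finset (Fin n) | IsMjMinus G k j x.1 x.2}.ncard

/-- The number of copies of `M_j^*` in `G`. -/
noncomputable def countMjStar (k j : ℕ) {n : ℕ} (G : Set (Finset (Fin n))) : ℕ :=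
  {x : Finset (Fin n) × Finset (Fin n) × Fin n × Fin n |
    IsMjStar G k j x.1 x.2.1 x.2.2.1 x.2.2.2}.ncard

/-! ### Combinatorics of the complete complex -/

section Combi

/-- All potential `k`-simplices. -/
noncomputable def allK (n k : ℕ) : Finset (Finset (Fin n)) :=
  Finset.powersetCard (k + 1) Finset.univ

/-- All potential `k`-simplices containing `τ`. -/
noncomputable def starK (n k : ℕ) (τ : Finset (Fin n)) : Finset (Finset (Fin n)) :=
  (allK n k).filter (fun K => τ ⊆ K)

/-- The number of `k`-simplices containing a fixed `c`-set. -/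
def cb (n k c : ℕ) : ℕ := (n - c).choose (k + 1 - c)

variable {n : ℕ}

lemma mem_allK {k : ℕ} {K : Finset (Fin n)} : K ∈ allK n k ↔ K.card = k + 1 := by
  simp [allK, Finset.mem_powersetCard]

lemma mem_starK {k : ℕ} {τ K : Finset (Fin n)} :
    K ∈ starK n k τ ↔ K.card = k + 1 ∧ τ ⊆ K := by
  simp [starK, mem_allK]

lemma card_starK {k : ℕ} (τ : Finset (Fin n)) (h : τ.card ≤ k + 1) :
    (starK n k τ).card = cb n k τ.card := by
  have := Finset.card_filter_powersetCard_subset τ (Finset.univ : Finset (Fin n)) (k + 1)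
    (Finset.subset_univ _) h
  rw [starK, allK, cb]
  simpa using this

lemma card_starK_le {k c : ℕ} (τ : Finset (Fin n)) (h : c ≤ τ.card) (hc : c ≤ k + 1) :
    (starK n k τ).card ≤ cb n k c := by
  obtain ⟨τ', h1, h2⟩ := Finset.exists_subset_card_eq h
  rw [← h2, ← card_starK τ' (by omega)]
  apply Finset.card_le_card
  intro K hK
  rw [mem_starK] at hK ⊢
  exact ⟨hK.1, h1.trans hK.2⟩

lemma cb_rel {k j : ℕ} (hjk : j < k) :
    (n - (j + 1)) * cb n k (j + 2) = (k - j) * cb n k (j + 1) := by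
  unfold cb
  obtain ⟨L, rfl⟩ : ∃ L, k = j + L + 1 := ⟨k - j - 1, by omega⟩
  rcases Nat.lt_or_ge (j + 1) n with h | h
  · obtain ⟨m, rfl⟩ : ∃ m, n = j + 2 + m := ⟨n - (j + 2), by omega⟩
    have e1 : j + 2 + m - (j + 1) = m + 1 := by omega
    have e2 : j + 2 + m - (j + 2) = m := by omega
    have e3 : j + L + 1 + 1 - (j + 2) = L := by omega
    have e4 : j + L + 1 + 1 - (j + 1) = L + 1 := by omega
    have e5 : j + L + 1 - j = L + 1 := by omega
    rw [e1, e2, e3, e4, e5, Nat.add_one_mul_choose_eq, mul_comm]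
  · have e1 : n - (j + 1) = 0 := by omega
    have e4 : j + L + 1 + 1 - (j + 1) = L + 1 := by omega
    rw [e1, e4]; simp

/-- Full coboundary. -/
noncomputable def dd (F : Finset (Fin n) → ZMod 2) (ρ : Finset (Fin n)) : ZMod 2 :=
  ∑ x ∈ ρ, F (ρ.erase x)

lemma dd_add (F G : Finset (Fin n) → ZMod 2) (ρ : Finset (Fin n)) :
    dd (fun σ => F σ + G σ) ρ = dd F ρ + dd G ρ := by
  simp [dd, Finset.sum_add_distrib]

lemma dd_dd (F : Finset (Fin n) → ZMod 2) (ρ : Finset (Fin n)) : dd (dd F) ρ = 0 := by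
  unfold dd
  rw [Finset.sum_sigma']
  refine Finset.sum_involution (fun x _ => ⟨x.2, x.1⟩) ?_ ?_ ?_ ?_
  · rintro ⟨a, b⟩ h
    simp only [Finset.erase_right_comm (a := a) (b := b)]
    exact CharTwo.add_self_eq_zero _
  · rintro ⟨a, b⟩ h _ he
    simp only [Finset.mem_sigma, Finset.mem_erase] at h
    simp only [Sigma.mk.injEq, heq_eq_eq] at he
    exact h.2.1 he.1
  · rintro ⟨a, b⟩ h
    simp only [Finset.mem_sigma, Finset.mem_erase] at h ⊢
    exact ⟨h.2.2, fun e => h.2.1 e.symm, h.1⟩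
  · rintro ⟨a, b⟩ h
    rfl

/-- Indicator cochain of a family of sets. -/
noncomputable def ind (S : Finset (Finset (Fin n))) : Finset (Fin n) → ZMod 2 :=
  fun σ => if σ ∈ S then 1 else 0

/-- The `k`-simplices that are not allowed when `S` is the support of a cocycle. -/
noncomputable def DD (k j : ℕ) (S : Finset (Finset (Fin n))) : Finset (Finset (Fin n)) :=
  (allK n k).filter (fun K => ∃ ρ, ρ ⊆ K ∧ ρ.card = j + 2 ∧ dd (ind S) ρ ≠ 0)

/-- Minimality of the support in the coboundary class. -/
def MinS (j : ℕ) (S : Finset (Finset (Fin n))) : Prop :=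
  ∀ g : Finset (Fin n) → ZMod 2,
    S.card ≤ ((Finset.powersetCard (j + 1) Finset.univ).filter
      (fun σ => ind S σ + dd g σ ≠ 0)).card

/-- The `k`-simplices containing exactly one element of `S`. -/
noncomputable def oneK (k : ℕ) (S : Finset (Finset (Fin n))) : Finset (Finset (Fin n)) :=
  (allK n k).filter (fun K => (S.filter (fun σ => σ ⊆ K)).card = 1)

lemma oneK_card {k j : ℕ} (hjk : j < k) (S : Finset (Finset (Fin n)))
    (hS : ∀ σ ∈ S, σ.card = j + 1) :
    S.card * cb n k (j + 1) ≤ (oneK k S).card + S.card ^ 2 * cb n k (j + 2) := by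
  have h1 : S.card * cb n k (j + 1) = ∑ K ∈ allK n k, (S.filter (fun σ => σ ⊆ K)).card := by
    have : ∀ σ ∈ S, (starK n k σ).card = cb n k (j + 1) := fun σ hσ => by
      rw [card_starK σ (by rw [hS σ hσ]; omega), hS σ hσ]
    rw [← smul_eq_mul, ← Finset.sum_const, ← Finset.sum_congr rfl this]
    simp only [starK, Finset.card_filter]
    rw [Finset.sum_comm]
  have h2 : ∑ K ∈ allK n k, (S.filter (fun σ => σ ⊆ K)).offDiag.card
      ≤ S.card ^ 2 * cb n k (j + 2) := by
    have e : ∀ K, (S.filter (fun σ => σ ⊆ K)).offDiag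
        = S.offDiag.filter (fun x => x.1 ⊆ K ∧ x.2 ⊆ K) := by
      intro K; ext ⟨a, b⟩
      simp only [Finset.mem_offDiag, Finset.mem_filter]
      tauto
    simp only [e, Finset.card_filter]
    rw [Finset.sum_comm]
    calc ∑ x ∈ S.offDiag, ∑ K ∈ allK n k, (if x.1 ⊆ K ∧ x.2 ⊆ K then 1 else 0)
        ≤ ∑ x ∈ S.offDiag, cb n k (j + 2) := by
          apply Finset.sum_le_sum
          rintro ⟨a, b⟩ hx
          rw [Finset.mem_offDiag] at hx
          have hc : j + 2 ≤ (a ∪ b).card := by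
            by_contra hlt
            have h3 : a = a ∪ b := Finset.eq_of_subset_of_card_le Finset.subset_union_left
              (by rw [hS a hx.1]; omega)
            have h4 : b = a ∪ b := Finset.eq_of_subset_of_card_le Finset.subset_union_right
              (by rw [hS b hx.2.1]; omega)
            exact hx.2.2 (h3.trans h4.symm)
          refine le_trans (le_of_eq ?_) (card_starK_le (k := k) (a ∪ b) hc (by omega))
          rw [starK, Finset.card_filter]
          simp only [Finset.union_subset_iff]
      _ = S.offDiag.card * cb n k (j + 2) := by simp
      _ ≤ _ := by
          gcongr
          rw [Finset.offDiag_card, sq]; omega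
  have h3 : (oneK k S).card = ∑ K ∈ allK n k,
      (if (S.filter (fun σ => σ ⊆ K)).card = 1 then 1 else 0) := by
    rw [oneK, Finset.card_filter]
  rw [h1, h3]
  refine le_trans ?_ (Nat.add_le_add_left h2 _)
  rw [← Finset.sum_add_distrib]
  apply Finset.sum_le_sum
  intro K _
  rw [Finset.offDiag_card]
  generalize (S.filter (fun σ => σ ⊆ K)).card = m
  rcases m with _ | _ | m
  · simp
  · simp
  · have : m + 2 ≤ (m + 1 + 1) * (m + 1 + 1) - (m + 1 + 1) := by
      have : (m + 1 + 1) * (m + 1 + 1) = (m + 1 + 1) * (m + 1) + (m + 1 + 1) := by ring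
      rw [this]; nlinarith [Nat.zero_le m, Nat.add_sub_cancel ((m + 1 + 1) * (m + 1)) (m + 1 + 1)]
    omega

lemma oneK_subset_DD {k j : ℕ} (hjk : j < k) (S : Finset (Finset (Fin n)))
    (hS : ∀ σ ∈ S, σ.card = j + 1) : oneK k S ⊆ DD k j S := by
  intro K hK
  rw [oneK, Finset.mem_filter, Finset.card_eq_one] at hK
  obtain ⟨hK, σ, hσ⟩ := hK
  have hσ' : σ ∈ S ∧ σ ⊆ K := by
    have : σ ∈ S.filter (fun σ => σ ⊆ K) := by rw [hσ]; simp
    simpa using this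
  have hu : ∀ σ', σ' ∈ S → σ' ⊆ K → σ' = σ := by
    intro σ' h1 h2
    have : σ' ∈ S.filter (fun σ => σ ⊆ K) := by simp [h1, h2]
    rw [hσ] at this; simpa using this
  have hcK := mem_allK.1 hK
  have hcσ := hS σ hσ'.1
  obtain ⟨v, hv, hvσ⟩ : ∃ v ∈ K, v ∉ σ := by
    by_contra hcon; push Not at hcon
    have := Finset.card_le_card (show K ⊆ σ from hcon); omega
  rw [DD, Finset.mem_filter]
  refine ⟨hK, insert v σ, Finset.insert_subset hv hσ'.2, ?_, ?_⟩
  · rw [Finset.card_insert_of_notMem hvσ, hcσ]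
  · unfold dd
    rw [Finset.sum_eq_single v]
    · rw [Finset.erase_insert hvσ]; simp [ind, hσ'.1]
    · intro x hx hxv
      have : (insert v σ).erase x ∉ S := by
        intro hmem
        have h5 := hu _ hmem ((Finset.erase_subset _ _).trans (Finset.insert_subset hv hσ'.2))
        have : v ∈ (insert v σ).erase x := by simp [Ne.symm hxv]
        rw [h5] at this; exact hvσ this
      simp [ind, this]
    · intro h; simp at h

lemma DD_small {k j : ℕ} (hjk : j < k) (S : Finset (Finset (Fin n)))
    (hS : ∀ σ ∈ S, σ.card = j + 1) :
    S.card * cb n k (j + 1) ≤ (DD k j S).card + S.card ^ 2 * cb n k (j + 2) :=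
  (oneK_card hjk S hS).trans
    (Nat.add_le_add_right (Finset.card_le_card (oneK_subset_DD hjk S hS)) _)

lemma MinS_expansion {j : ℕ} (S : Finset (Finset (Fin n)))
    (hS : ∀ σ ∈ S, σ.card = j + 1) (hmin : MinS j S) :
    n * S.card ≤ (j + 2) * ((Finset.powersetCard (j + 2) Finset.univ).filter
      (fun ρ => dd (ind S) ρ ≠ 0)).card := by
  set T := ((Finset.powersetCard (j + 2) (Finset.univ : Finset (Fin n))).filter
      (fun ρ => dd (ind S) ρ ≠ 0)) with hT
  have key : ∀ v : Fin n, S.card ≤ (T.filter (fun ρ => v ∈ ρ)).card := by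
    intro v
    set g : Finset (Fin n) → ZMod 2 := fun τ => if v ∈ τ then 0 else ind S (insert v τ) with hg
    refine (hmin g).trans ?_
    have hin : ∀ σ : Finset (Fin n), v ∈ σ → ind S σ + dd g σ = 0 := by
      intro σ hv
      unfold dd
      rw [Finset.sum_eq_single v]
      · simp [hg, Finset.insert_erase hv, CharTwo.add_self_eq_zero]
      · intro x hx hxv
        simp [hg, Ne.symm hxv, hv]
      · intro h; exact absurd hv h
    have hout : ∀ σ : Finset (Fin n), v ∉ σ → ind S σ + dd g σ = dd (ind S) (insert v σ) := by
      intro σ hv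
      unfold dd
      rw [Finset.sum_insert hv, Finset.erase_insert hv]
      congr 1
      apply Finset.sum_congr rfl
      intro x hx
      have hxv : v ≠ x := fun h => hv (h ▸ hx)
      simp [hg, hv, Finset.erase_insert_of_ne hxv]
    apply Finset.card_le_card_of_injOn (fun σ => insert v σ)
    · intro σ hσ
      simp only [Finset.coe_filter, Finset.mem_powersetCard, Finset.subset_univ, true_and,
        Set.mem_setOf_eq] at hσ
      have hv : v ∉ σ := fun h => hσ.2 (hin σ h)
      simp only [hT, Finset.coe_filter, Finset.mem_filter, Finset.mem_powersetCard,
        Finset.subset_univ, true_and, Set.mem_setOf_eq]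
      refine ⟨⟨by rw [Finset.card_insert_of_notMem hv, hσ.1], ?_⟩, by simp⟩
      rw [← hout σ hv]; exact hσ.2
    · intro σ hσ σ' hσ' he
      simp only [Finset.coe_filter, Finset.mem_powersetCard, Finset.subset_univ, true_and,
        Set.mem_setOf_eq] at hσ hσ'
      have hv : v ∉ σ := fun h => hσ.2 (hin σ h)
      have hv' : v ∉ σ' := fun h => hσ'.2 (hin σ' h)
      simp only at he
      rw [← Finset.erase_insert hv, he, Finset.erase_insert hv']
  calc n * S.card = ∑ v : Fin n, S.card := by simp
    _ ≤ ∑ v : Fin n, (T.filter (fun ρ => v ∈ ρ)).card := Finset.sum_le_sum fun v _ => key v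
    _ = ∑ ρ ∈ T, ρ.card := by
        simp only [Finset.card_filter]
        rw [Finset.sum_comm]
        apply Finset.sum_congr rfl
        intro ρ _
        simp
    _ = ∑ ρ ∈ T, (j + 2) := by
        apply Finset.sum_congr rfl
        intro ρ hρ
        simp only [hT, Finset.mem_filter, Finset.mem_powersetCard] at hρ
        exact hρ.1.2
    _ = _ := by simp [mul_comm]

lemma DD_double {k j : ℕ} (hjk : j < k) (S : Finset (Finset (Fin n))) :
    ((Finset.powersetCard (j + 2) Finset.univ).filter
      (fun ρ => dd (ind S) ρ ≠ 0)).card * cb n k (j + 2)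
      ≤ (k + 1).choose (j + 2) * (DD k j S).card := by
  set T := ((Finset.powersetCard (j + 2) (Finset.univ : Finset (Fin n))).filter
      (fun ρ => dd (ind S) ρ ≠ 0)) with hT
  have hTm : ∀ ρ ∈ T, ρ.card = j + 2 ∧ dd (ind S) ρ ≠ 0 := by
    intro ρ hρ
    simpa [hT, Finset.mem_filter, Finset.mem_powersetCard] using hρ
  calc T.card * cb n k (j + 2) = ∑ ρ ∈ T, (starK n k ρ).card := by
        rw [← smul_eq_mul, ← Finset.sum_const]
        apply Finset.sum_congr rfl
        intro ρ hρ
        rw [card_starK ρ (by rw [(hTm ρ hρ).1]; omega), (hTm ρ hρ).1]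
    _ = ∑ ρ ∈ T, ((DD k j S).filter (fun K => ρ ⊆ K)).card := by
        apply Finset.sum_congr rfl
        intro ρ hρ
        congr 1
        ext K
        simp only [starK, DD, Finset.mem_filter]
        constructor
        · rintro ⟨h1, h2⟩; exact ⟨⟨h1, ρ, h2, hTm ρ hρ⟩, h2⟩
        · rintro ⟨h1, h2⟩; exact ⟨h1.1, h2⟩
    _ = ∑ K ∈ DD k j S, (T.filter (fun ρ => ρ ⊆ K)).card := by
        simp only [Finset.card_filter]
        rw [Finset.sum_comm]
    _ ≤ ∑ K ∈ DD k j S, (k + 1).choose (j + 2) := by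
        apply Finset.sum_le_sum
        intro K hK
        have hK' : K.card = k + 1 := mem_allK.1 (Finset.mem_filter.1 hK).1
        rw [← hK', ← Finset.card_powersetCard]
        apply Finset.card_le_card
        intro ρ hρ
        rw [Finset.mem_filter] at hρ
        rw [Finset.mem_powersetCard]
        exact ⟨hρ.2, (hTm ρ hρ.1).1⟩
    _ = _ := by simp [mul_comm]

lemma DD_large {k j : ℕ} (hjk : j < k) (S : Finset (Finset (Fin n)))
    (hS : ∀ σ ∈ S, σ.card = j + 1) (hmin : MinS j S) :
    S.card * cb n k (j + 1) ≤ (j + 2) * (k + 1).choose (j + 2) * (DD k j S).card := by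
  have h1 := MinS_expansion S hS hmin
  have h2 := DD_double hjk S
  have h3 := cb_rel (n := n) hjk
  calc S.card * cb n k (j + 1) ≤ S.card * ((k - j) * cb n k (j + 1)) := by
        gcongr; exact Nat.le_mul_of_pos_left _ (by omega)
    _ = S.card * ((n - (j + 1)) * cb n k (j + 2)) := by rw [h3]
    _ ≤ S.card * (n * cb n k (j + 2)) := by gcongr; omega
    _ = n * S.card * cb n k (j + 2) := by ring
    _ ≤ _ := Nat.mul_le_mul_right _ h1
    _ = (j + 2) * (_ * cb n k (j + 2)) := by rw [mul_assoc]
    _ ≤ _ := Nat.mul_le_mul_left _ h2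
    _ = _ := by ring

end Combi

/-! ### Minimal bad cocycles -/

section Coc

variable {n : ℕ}

/-- The `k`-simplices born by time `p`. -/
noncomputable def born (k : ℕ) (t : Finset (Fin n) → ℝ) (p : ℝ) : Finset (Finset (Fin n)) :=
  (allK n k).filter (fun K => t K ≤ p)

/-- Connectivity of `S` via the `k`-simplices in `B`. -/
def Conn (B S : Finset (Finset (Fin n))) : Prop :=
  ∀ T ⊆ S, T.Nonempty → T ≠ S → ∃ u ∈ T, ∃ v ∈ S \ T, ∃ K ∈ B, u ⊆ K ∧ v ⊆ K

lemma Conn.mono {B B' S : Finset (Finset (Fin n))} (h : Conn B S) (hB : B ⊆ B') : Conn B' S := by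
  intro T h1 h2 h3
  obtain ⟨u, hu, v, hv, K, hK, h4⟩ := h T h1 h2 h3
  exact ⟨u, hu, v, hv, K, hB hK, h4⟩

lemma mem_born {k : ℕ} {t : Finset (Fin n) → ℝ} {p : ℝ} {K : Finset (Fin n)} :
    K ∈ born k t p ↔ K.card = k + 1 ∧ t K ≤ p := by
  simp [born, mem_allK]

lemma cA_down {k : ℕ} {t : Finset (Fin n) → ℝ} {p : ℝ} {A B : Finset (Fin n)}
    (hA : A ∈ complexAt k n t p) (hB : B ⊆ A) (hne : B.Nonempty) : B ∈ complexAt k n t p := by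
  rcases hA with ⟨v, rfl⟩ | ⟨_, K, h1, h2, h3⟩
  · left; refine ⟨v, ?_⟩
    rcases Finset.subset_singleton_iff.1 hB with h | h
    · simp [h] at hne
    · exact h
  · right; exact ⟨hne, K, h1, h2, hB.trans h3⟩

lemma cA_mem {k : ℕ} {t : Finset (Fin n) → ℝ} {p : ℝ} {A K : Finset (Fin n)}
    (hK : K ∈ born k t p) (hA : A ⊆ K) (hne : A.Nonempty) : A ∈ complexAt k n t p := by
  rw [mem_born] at hK
  right; exact ⟨hne, K, hK.1, hK.2, hA⟩

lemma cA_cover {k : ℕ} {t : Finset (Fin n) → ℝ} {p : ℝ} {A : Finset (Fin n)}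
    (hA : A ∈ complexAt k n t p) (hc : 2 ≤ A.card) : ∃ K ∈ born k t p, A ⊆ K := by
  rcases hA with ⟨v, rfl⟩ | ⟨_, K, h1, h2, h3⟩
  · simp at hc
  · exact ⟨K, mem_born.2 ⟨h1, h2⟩, h3⟩

lemma cA_k {k : ℕ} (hk : 1 ≤ k) {t : Finset (Fin n) → ℝ} {p : ℝ} {K : Finset (Fin n)} :
    IsSimplex (complexAt k n t p) k K ↔ K ∈ born k t p := by
  constructor
  · rintro ⟨h1, h2⟩
    obtain ⟨K', h3, h4⟩ := cA_cover h1 (by omega)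
    have : K = K' := Finset.eq_of_subset_of_card_le h4 (by rw [(mem_born.1 h3).1, h2])
    rwa [this]
  · intro h
    have hc := (mem_born.1 h).1
    exact ⟨cA_mem h (Finset.Subset.refl _) (Finset.card_pos.1 (by omega)), hc⟩

/-- Extension of a cochain by zero. -/
noncomputable def ext0 {G : Set (Finset (Fin n))} {i : ℕ} (f : Cochain G i) :
    Finset (Fin n) → ZMod 2 :=
  fun σ => if h : IsSimplex G i σ then f ⟨σ, h⟩ else 0

lemma coboundary_eq {G : Set (Finset (Fin n))} {i : ℕ} (f : Cochain G i)
    (σ : {A : Finset (Fin n) // IsSimplex G (i + 1) A}) :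
    coboundary G i f σ = dd (ext0 f) σ := by
  change ∑ τ ∈ Finset.powersetCard (i + 1) (σ : Finset (Fin n)), ext0 f τ = _
  unfold dd
  have hc : (σ : Finset (Fin n)).card = i + 2 := σ.2.2
  symm
  refine Finset.sum_bij (fun x _ => (σ : Finset (Fin n)).erase x) ?_ ?_ ?_ ?_
  · intro x hx
    rw [Finset.mem_powersetCard]
    exact ⟨Finset.erase_subset _ _, by rw [Finset.card_erase_of_mem hx, hc]; rfl⟩
  · intro x hx y hy h
    by_contra hne
    have : y ∈ (σ : Finset (Fin n)).erase x := Finset.mem_erase.2 ⟨Ne.symm hne, hy⟩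
    rw [h] at this; simp at this
  · intro τ hτ
    rw [Finset.mem_powersetCard] at hτ
    obtain ⟨x, hx, hxτ⟩ : ∃ x ∈ (σ : Finset (Fin n)), x ∉ τ := by
      by_contra hcon; push Not at hcon
      have := Finset.card_le_card (show (σ : Finset (Fin n)) ⊆ τ from hcon); omega
    refine ⟨x, hx, ?_⟩
    symm
    apply Finset.eq_of_subset_of_card_le
    · intro y hy
      exact Finset.mem_erase.2 ⟨fun h => hxτ (h ▸ hy), hτ.1 hy⟩
    · rw [Finset.card_erase_of_mem hx]; omega
  · intros; rfl

lemma mem_cocycles {G : Set (Finset (Fin n))} {i : ℕ} (f : Cochain G i) :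
    f ∈ cocycles G i ↔ ∀ ρ, IsSimplex G (i + 1) ρ → dd (ext0 f) ρ = 0 := by
  rw [cocycles, LinearMap.mem_ker]
  constructor
  · intro h ρ hρ
    rw [← coboundary_eq f ⟨ρ, hρ⟩, h]; rfl
  · intro h
    funext σ
    rw [coboundary_eq]; exact h _ σ.2

lemma mem_coboundaries {k j : ℕ} (hj : 1 ≤ j) {t : Finset (Fin n) → ℝ} {p : ℝ}
    (g : Finset (Fin n) → ZMod 2) :
    (fun σ => dd g σ : Cochain (complexAt k n t p) j) ∈ coboundaries (complexAt k n t p) j := by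
  obtain ⟨i, rfl⟩ : ∃ i, j = i + 1 := ⟨j - 1, by omega⟩
  rw [coboundaries, LinearMap.mem_range]
  refine ⟨fun τ => g τ, ?_⟩
  funext σ
  rw [coboundary_eq]
  unfold dd
  apply Finset.sum_congr rfl
  intro x hx
  have hs : IsSimplex (complexAt k n t p) i ((σ : Finset (Fin n)).erase x) := by
    have hc : ((σ : Finset (Fin n)).erase x).card = i + 1 := by
      rw [Finset.card_erase_of_mem hx, σ.2.2]; rfl
    exact ⟨cA_down σ.2.1 (Finset.erase_subset _ _) (Finset.card_pos.1 (by omega)), hc⟩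
  simp [ext0, hs]

/-- support -/
noncomputable def supp0 {G : Set (Finset (Fin n))} {i : ℕ} (f : Cochain G i) :
    Finset (Finset (Fin n)) :=
  Finset.univ.filter (fun σ => ext0 f σ ≠ 0)

lemma zmod2_cases (x : ZMod 2) : x = 0 ∨ x = 1 := by
  revert x; decide

lemma mem_supp0 {G : Set (Finset (Fin n))} {i : ℕ} {f : Cochain G i} {σ : Finset (Fin n)} :
    σ ∈ supp0 f ↔ ext0 f σ ≠ 0 := by
  simp [supp0]

lemma ind_supp0 {G : Set (Finset (Fin n))} {i : ℕ} (f : Cochain G i) :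
    ind (supp0 f) = ext0 f := by
  funext σ
  rcases zmod2_cases (ext0 f σ) with h | h <;> simp [ind, supp0, h]

lemma supp0_simplex {G : Set (Finset (Fin n))} {i : ℕ} {f : Cochain G i} {σ : Finset (Fin n)}
    (h : σ ∈ supp0 f) : IsSimplex G i σ := by
  by_contra hn
  simp [supp0, ext0, hn] at h

lemma min_cocycle {k j : ℕ} (hj : 1 ≤ j) {t : Finset (Fin n) → ℝ} {p : ℝ}
    (M : Submodule (ZMod 2) (Cochain (complexAt k n t p) j))
    (hM : coboundaries (complexAt k n t p) j ≤ M)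
    (f0 : Cochain (complexAt k n t p) j) (hf0 : f0 ∈ cocycles (complexAt k n t p) j)
    (hf0M : f0 ∉ M) :
    ∃ f : Cochain (complexAt k n t p) j, f ∈ cocycles (complexAt k n t p) j ∧ f ∉ M ∧
      MinS j (supp0 f) ∧ (supp0 f).Nonempty ∧ Conn (born k t p) (supp0 f) := by
  have hex : ∃ m : ℕ, ∃ f : Cochain (complexAt k n t p) j, f ∈ cocycles (complexAt k n t p) j ∧ f ∉ M ∧ (supp0 f).card = m :=
    ⟨_, f0, hf0, hf0M, rfl⟩
  obtain ⟨f, hf, hfM, hfc⟩ := Nat.find_spec hex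
  have hmin : ∀ f' : Cochain (complexAt k n t p) j, f' ∈ cocycles (complexAt k n t p) j → (supp0 f').card < (supp0 f).card →
      f' ∈ M := by
    intro f' h1 h2
    by_contra h3
    rw [hfc] at h2
    exact Nat.find_min hex h2 ⟨f', h1, h3, rfl⟩
  rw [mem_cocycles] at hf
  refine ⟨f, (mem_cocycles f).2 hf, hfM, ?_, ?_, ?_⟩
  · intro g
    set f' : Cochain (complexAt k n t p) j := f + (fun σ => dd g σ : Cochain (complexAt k n t p) j) with hf'
    have hcob : (fun σ => dd g σ : Cochain (complexAt k n t p) j) ∈ coboundaries (complexAt k n t p) j := mem_coboundaries hj g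
    have hf'M : f' ∉ M := fun h => hfM ((Submodule.add_mem_iff_left M (hM hcob)).1 h)
    have hext : ∀ σ, IsSimplex (complexAt k n t p) j σ → ext0 f' σ = ext0 f σ + dd g σ := by
      intro σ hσ
      simp [ext0, hσ, hf']
    have hf'c : f' ∈ cocycles (complexAt k n t p) j := by
      rw [mem_cocycles]
      intro ρ hρ
      have : dd (ext0 f') ρ = dd (fun σ => ext0 f σ + dd g σ) ρ := by
        unfold dd
        apply Finset.sum_congr rfl
        intro x hx
        rw [hext]; · rfl
        have hc : (ρ.erase x).card = j + 1 := by
          rw [Finset.card_erase_of_mem hx, hρ.2]; rfl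
        exact ⟨cA_down hρ.1 (Finset.erase_subset _ _) (Finset.card_pos.1 (by omega)), hc⟩
      rw [this, dd_add, hf ρ hρ, dd_dd, add_zero]
    have h1 : (supp0 f).card ≤ (supp0 f').card := by
      by_contra h; exact hf'M (hmin f' hf'c (by omega))
    refine h1.trans (Finset.card_le_card ?_)
    intro σ hσ
    have hs := supp0_simplex hσ
    rw [Finset.mem_filter, Finset.mem_powersetCard, ind_supp0, ← hext σ hs]
    exact ⟨⟨Finset.subset_univ _, hs.2⟩, by simpa [supp0] using hσ⟩
  · by_contra hne
    rw [Finset.not_nonempty_iff_eq_empty] at hne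
    apply hfM
    have : f = 0 := by
      funext σ
      have h := congrFun (ind_supp0 f) σ.1
      rw [hne] at h
      simpa [ind, ext0, σ.2] using h.symm
    rw [this]; exact M.zero_mem
  · intro T hT hTne hTS
    by_contra hcon
    push Not at hcon
    have hres : ∀ T' : Finset (Finset (Fin n)), T' ⊆ supp0 f → T' ≠ supp0 f →
        (∀ u ∈ T', ∀ v ∈ supp0 f \ T', ∀ K ∈ born k t p, u ⊆ K → ¬ v ⊆ K) →
        (fun σ => ind T' σ : Cochain (complexAt k n t p) j) ∈ M := by
      intro T' h1 h2 h3
      have hext : ext0 (fun σ => ind T' σ : Cochain (complexAt k n t p) j) = ind T' := by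
        funext σ
        by_cases hσ : IsSimplex (complexAt k n t p) j σ
        · simp [ext0, hσ]
        · have : σ ∉ T' := fun h => hσ (supp0_simplex (h1 h))
          simp [ext0, hσ, ind, this]
      apply hmin
      · rw [mem_cocycles, hext]
        intro ρ hρ
        obtain ⟨K, hK, hρK⟩ := cA_cover hρ.1 (by rw [hρ.2]; omega)
        by_cases hu : ∃ u ∈ T', u ⊆ ρ
        · obtain ⟨u, hu, huρ⟩ := hu
          rw [← hf ρ hρ, ← ind_supp0]
          unfold dd
          apply Finset.sum_congr rfl
          intro x hx
          have : ρ.erase x ∈ T' ↔ ρ.erase x ∈ supp0 f := by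
            refine ⟨fun h => h1 h, fun h => ?_⟩
            by_contra h'
            exact h3 u hu _ (Finset.mem_sdiff.2 ⟨h, h'⟩) K hK (huρ.trans hρK)
              ((Finset.erase_subset _ _).trans hρK)
          simp [ind, this]
        · push Not at hu
          unfold dd
          apply Finset.sum_eq_zero
          intro x hx
          have : ρ.erase x ∉ T' := fun h => hu _ h (Finset.erase_subset _ _)
          simp [ind, this]
      · have : supp0 (fun σ => ind T' σ : Cochain (complexAt k n t p) j) = T' := by
          ext σ; rw [mem_supp0, hext]; simp [ind]
        rw [this]
        exact Finset.card_lt_card (lt_of_le_of_ne h1 h2)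
    have hA := hres T hT hTS (fun u hu v hv K hK h1 => hcon u hu v hv K hK h1)
    have hB := hres (supp0 f \ T) Finset.sdiff_subset
      (by
        intro h
        obtain ⟨x, hx⟩ := hTne
        have : x ∈ supp0 f \ T := by rw [h]; exact hT hx
        exact (Finset.mem_sdiff.1 this).2 hx)
      (by
        intro u hu v hv K hK h1 h2
        have hvT : v ∈ T := by
          rw [Finset.mem_sdiff, Finset.mem_sdiff] at hv
          by_contra h; exact hv.2 ⟨hv.1, h⟩
        exact hcon v hvT u hu K hK h2 h1)
    apply hfM
    have : f = (fun σ => ind T σ : Cochain (complexAt k n t p) j) + (fun σ => ind (supp0 f \ T) σ : Cochain (complexAt k n t p) j) := by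
      funext σ
      have h := congrFun (ind_supp0 f) σ.1
      have h' : ext0 f σ.1 = f σ := by simp [ext0, σ.2]
      rw [← h', ← h]
      by_cases h1 : σ.1 ∈ T
      · simp [ind, h1, hT h1]
      · simp [ind, h1]
    rw [this]
    exact M.add_mem hA hB

lemma DD_unborn {k j : ℕ} {t : Finset (Fin n) → ℝ} {p : ℝ}
    (f : Cochain (complexAt k n t p) j) (hf : f ∈ cocycles (complexAt k n t p) j)
    (K : Finset (Fin n)) (hK : K ∈ DD k j (supp0 f)) : p < t K := by
  rw [mem_cocycles] at hf
  rw [DD, Finset.mem_filter, mem_allK] at hK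
  obtain ⟨hc, ρ, h1, h2, h3⟩ := hK
  by_contra hle
  push Not at hle
  rw [ind_supp0] at h3
  exact h3 (hf ρ ⟨cA_mem (mem_born.2 ⟨hc, hle⟩) h1 (Finset.card_pos.1 (by omega)), h2⟩)

/-- In a `k`-simplex, each support element forces `k-j` further ones. -/
lemma supp_in_K {k j : ℕ} (S : Finset (Finset (Fin n)))
    (hS : ∀ σ ∈ S, σ.card = j + 1) {K : Finset (Fin n)} (hK : K.card = k + 1)
    (hKD : K ∉ DD k j S) {σ : Finset (Fin n)} (hσ : σ ∈ S) (hσK : σ ⊆ K) :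
    ∀ v ∈ K \ σ, ∃ x ∈ σ, (insert v σ).erase x ∈ S := by
  intro v hv
  rw [Finset.mem_sdiff] at hv
  have h0 : dd (ind S) (insert v σ) = 0 := by
    by_contra h
    apply hKD
    rw [DD, Finset.mem_filter, mem_allK]
    exact ⟨hK, _, Finset.insert_subset hv.1 hσK,
      by rw [Finset.card_insert_of_notMem hv.2, hS σ hσ], h⟩
  by_contra hcon
  push Not at hcon
  unfold dd at h0
  rw [Finset.sum_insert hv.2, Finset.erase_insert hv.2, Finset.sum_eq_zero] at h0
  · simp [ind, hσ] at h0
  · intro x hx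
    simp [ind, hcon x hx]

lemma supp_in_K_card {k j : ℕ} (S : Finset (Finset (Fin n)))
    (hS : ∀ σ ∈ S, σ.card = j + 1) {K : Finset (Fin n)} (hK : K.card = k + 1)
    (hKD : K ∉ DD k j S) {σ : Finset (Fin n)} (hσ : σ ∈ S) (hσK : σ ⊆ K) :
    k - j + 1 ≤ (S.filter (fun τ => τ ⊆ K)).card := by
  have h := supp_in_K S hS hK hKD hσ hσK
  choose! x hx hxS using h
  have hsub : insert σ ((K \ σ).image (fun v => (insert v σ).erase (x v)))
      ⊆ S.filter (fun τ => τ ⊆ K) := by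
    intro τ hτ
    rw [Finset.mem_insert, Finset.mem_image] at hτ
    rw [Finset.mem_filter]
    rcases hτ with rfl | ⟨v, hv, rfl⟩
    · exact ⟨hσ, hσK⟩
    · exact ⟨hxS v hv, (Finset.erase_subset _ _).trans
        (Finset.insert_subset (Finset.mem_sdiff.1 hv).1 hσK)⟩
  refine le_trans ?_ (Finset.card_le_card hsub)
  have hmem : ∀ v ∈ K \ σ, v ∈ (insert v σ).erase (x v) := by
    intro v hv
    rw [Finset.mem_erase]
    exact ⟨fun h => (Finset.mem_sdiff.1 hv).2 (h ▸ hx v hv), Finset.mem_insert_self _ _⟩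
  rw [Finset.card_insert_of_notMem, Finset.card_image_of_injOn, Finset.card_sdiff_of_subset hσK, hK,
    hS σ hσ]
  · omega
  · intro v hv w hw h
    have h1 := hmem v hv
    simp only at h
    rw [h, Finset.mem_erase, Finset.mem_insert] at h1
    rcases h1.2 with h2 | h2
    · exact h2
    · exact absurd h2 (Finset.mem_sdiff.1 hv).2
  · rw [Finset.mem_image]
    rintro ⟨v, hv, h⟩
    have := hmem v hv
    rw [h] at this
    exact (Finset.mem_sdiff.1 hv).2 this

lemma supp_flower {k j : ℕ} (S : Finset (Finset (Fin n)))
    (hS : ∀ σ ∈ S, σ.card = j + 1) {K : Finset (Fin n)} (hjk : j < k) (hK : K.card = k + 1)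
    (hKD : K ∉ DD k j S) {σ : Finset (Fin n)} (hσ : σ ∈ S) (hσK : σ ⊆ K)
    (hc : S.card = k - j + 1) :
    ∃ C, C.card = j ∧ C ⊆ K ∧ (S : Set (Finset (Fin n))) = Flower K C := by
  have h := supp_in_K S hS hK hKD hσ hσK
  choose! x hx hxS using h
  have hmem : ∀ v ∈ K \ σ, v ∈ (insert v σ).erase (x v) := by
    intro v hv
    rw [Finset.mem_erase]
    exact ⟨fun h => (Finset.mem_sdiff.1 hv).2 (h ▸ hx v hv), Finset.mem_insert_self _ _⟩
  have hsub : insert σ ((K \ σ).image (fun v => (insert v σ).erase (x v))) ⊆ S := by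
    intro τ hτ
    rw [Finset.mem_insert, Finset.mem_image] at hτ
    rcases hτ with rfl | ⟨v, hv, rfl⟩
    · exact hσ
    · exact hxS v hv
  have hcard : (insert σ ((K \ σ).image (fun v => (insert v σ).erase (x v)))).card = k - j + 1 := by
    rw [Finset.card_insert_of_notMem, Finset.card_image_of_injOn, Finset.card_sdiff_of_subset hσK, hK,
      hS σ hσ]
    · omega
    · intro v hv w hw h
      have h1 := hmem v hv
      simp only at h
      rw [h, Finset.mem_erase, Finset.mem_insert] at h1
      rcases h1.2 with h2 | h2
      · exact h2
      · exact absurd h2 (Finset.mem_sdiff.1 hv).2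
    · rw [Finset.mem_image]
      rintro ⟨v, hv, h⟩
      have := hmem v hv
      rw [h] at this
      exact (Finset.mem_sdiff.1 hv).2 this
  have hSeq : insert σ ((K \ σ).image (fun v => (insert v σ).erase (x v))) = S :=
    Finset.eq_of_subset_of_card_le hsub (by rw [hcard, hc])
  have hSmem : ∀ τ ∈ S, τ = σ ∨ ∃ v ∈ K \ σ, τ = (insert v σ).erase (x v) := by
    intro τ hτ
    rw [← hSeq, Finset.mem_insert, Finset.mem_image] at hτ
    rcases hτ with h | ⟨v, hv, h⟩
    · exact Or.inl h
    · exact Or.inr ⟨v, hv, h.symm⟩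
  have hxx : ∀ v ∈ K \ σ, ∀ w ∈ K \ σ, x v = x w := by
    intro v hv w hw
    by_contra hne
    have hvw : v ≠ w := fun h => hne (by rw [h])
    have hv' := Finset.mem_sdiff.1 hv
    have hw' := Finset.mem_sdiff.1 hw
    have hτK : (insert v σ).erase (x v) ⊆ K :=
      (Finset.erase_subset _ _).trans (Finset.insert_subset hv'.1 hσK)
    have hwτ : w ∈ K \ (insert v σ).erase (x v) := by
      rw [Finset.mem_sdiff, Finset.mem_erase, Finset.mem_insert]
      refine ⟨hw'.1, ?_⟩
      rintro ⟨_, h | h⟩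
      · exact hvw h.symm
      · exact hw'.2 h
    obtain ⟨y, hy, hyS⟩ := supp_in_K S hS hK hKD (hxS v hv) hτK w hwτ
    have hwx : w ≠ x v := fun h => hw'.2 (h ▸ hx v hv)
    have hwy : w ≠ y := by
      rintro rfl; exact (Finset.mem_sdiff.1 hwτ).2 hy
    have hxv : x v ∉ (insert w ((insert v σ).erase (x v))).erase y := by
      simp only [Finset.mem_erase, Finset.mem_insert]
      rintro ⟨_, h | h⟩
      · exact hwx h.symm
      · exact h.1 rfl
    have hwin : w ∈ (insert w ((insert v σ).erase (x v))).erase y := by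
      simp [hwy]
    rcases hSmem _ hyS with h | ⟨u, hu, h⟩
    · rw [h] at hwin; exact hw'.2 hwin
    · have huw : u = w := by
        rw [h, Finset.mem_erase, Finset.mem_insert] at hwin
        rcases hwin.2 with h2 | h2
        · exact h2.symm
        · exact absurd h2 hw'.2
      subst huw
      apply hxv
      rw [h, Finset.mem_erase]
      exact ⟨hne, Finset.mem_insert_of_mem (hx v hv)⟩
  obtain ⟨v0, hv0⟩ : (K \ σ).Nonempty := by
    rw [← Finset.card_pos, Finset.card_sdiff_of_subset hσK, hK, hS σ hσ]; omega
  have hx0 := hx v0 hv0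
  refine ⟨σ.erase (x v0), by rw [Finset.card_erase_of_mem hx0, hS σ hσ]; rfl,
    (Finset.erase_subset _ _).trans hσK, ?_⟩
  have hpet : ∀ v ∈ K \ σ, (insert v σ).erase (x v) = insert v (σ.erase (x v0)) := by
    intro v hv
    rw [hxx v hv v0 hv0, Finset.erase_insert_of_ne]
    rintro rfl
    exact (Finset.mem_sdiff.1 hv).2 hx0
  ext τ
  rw [Finset.mem_coe]
  constructor
  · intro hτ
    rcases hSmem τ hτ with h | ⟨v, hv, h⟩
    · refine ⟨x v0, ?_, ?_⟩
      · simp [hσK hx0]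
      · rw [Finset.insert_erase hx0, h]
    · refine ⟨v, ?_, ?_⟩
      · rw [Finset.mem_sdiff] at hv ⊢
        exact ⟨hv.1, fun h => hv.2 (Finset.mem_of_mem_erase h)⟩
      · rw [h, hpet v hv]
  · rintro ⟨w, hw, rfl⟩
    by_cases hwσ : w ∈ σ
    · have : w = x v0 := by
        by_contra hne
        exact (Finset.mem_sdiff.1 hw).2 (Finset.mem_erase.2 ⟨hne, hwσ⟩)
      rw [this, Finset.insert_erase hx0]; exact hσ
    · have hw' : w ∈ K \ σ := Finset.mem_sdiff.2 ⟨(Finset.mem_sdiff.1 hw).1, hwσ⟩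
      rw [← hpet w hw']; exact hxS w hw'

/-- The submodule of generated cochains. -/
noncomputable def GenMod (G : Set (Finset (Fin n))) (k j : ℕ) : Submodule (ZMod 2) (Cochain G j) :=
  coboundaries G j ⊔ Submodule.span (ZMod 2) {f | ∃ K C, ArisesFrom G k j f K C}

lemma gen_of_mem {G : Set (Finset (Fin n))} {k j : ℕ} {f : Cochain G j}
    (hf : f ∈ GenMod G k j) : GeneratedByMjMinus G k j f := by
  rw [GenMod, Submodule.mem_sup] at hf
  obtain ⟨y, hy, z, hz, rfl⟩ := hf
  have key : ∃ (m : ℕ) (fs : Fin m → Cochain G j),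
      (∀ i, ∃ K C, ArisesFrom G k j (fs i) K C) ∧ z = ∑ i, fs i := by
    induction hz using Submodule.span_induction with
    | mem x hx => exact ⟨1, fun _ => x, fun _ => hx, by simp⟩
    | zero => exact ⟨0, Fin.elim0, fun i => i.elim0, by simp⟩
    | add a b _ _ ha hb =>
      obtain ⟨m, fs, h1, h2⟩ := ha
      obtain ⟨m', fs', h1', h2'⟩ := hb
      refine ⟨m + m', Fin.append fs fs', ?_, ?_⟩
      · intro i
        refine Fin.addCases (fun i => ?_) (fun i => ?_) i
        · rw [Fin.append_left]; exact h1 i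
        · rw [Fin.append_right]; exact h1' i
      · rw [Fin.sum_univ_add, h2, h2']; simp
    | smul c a _ ha =>
      rcases zmod2_cases c with rfl | rfl
      · exact ⟨0, Fin.elim0, fun i => i.elim0, by simp⟩
      · simpa using ha
  obtain ⟨m, fs, h1, h2⟩ := key
  exact ⟨m, fs, h1, by rw [← h2]; simpa using hy⟩

lemma bad_support {k j : ℕ} (hj : 1 ≤ j) (hjk : j < k) {t : Finset (Fin n) → ℝ} {p : ℝ}
    (f : Cochain (complexAt k n t p) j) (hf : f ∈ cocycles (complexAt k n t p) j)
    (hng : ¬ GeneratedByMjMinus (complexAt k n t p) k j f) :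
    ∃ S : Finset (Finset (Fin n)), (∀ σ ∈ S, σ.card = j + 1) ∧ MinS j S ∧
      (∀ K ∈ DD k j S, p < t K) ∧ Conn (born k t p) S ∧ k - j + 2 ≤ S.card := by
  obtain ⟨f, hf, hfM, hmin, hne, hconn⟩ := min_cocycle hj (GenMod (complexAt k n t p) k j)
    le_sup_left f hf (fun h => hng (gen_of_mem h))
  have hS : ∀ σ ∈ supp0 f, σ.card = j + 1 := fun σ hσ => (supp0_simplex hσ).2
  have hun := DD_unborn f hf
  refine ⟨supp0 f, hS, hmin, hun, hconn, ?_⟩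
  obtain ⟨σ, hσ⟩ := hne
  obtain ⟨K, hK, hσK⟩ := cA_cover (supp0_simplex hσ).1 (by rw [hS σ hσ]; omega)
  have hnD : ∀ K ∈ born k t p, K ∉ DD k j (supp0 f) := fun K hK h =>
    absurd (hun K h) (not_lt.2 (mem_born.1 hK).2)
  have hcard : ∀ K ∈ born k t p, ∀ σ ∈ supp0 f, σ ⊆ K →
      k - j + 1 ≤ ((supp0 f).filter (fun τ => τ ⊆ K)).card := fun K hK σ hσ hσK =>
    supp_in_K_card (supp0 f) hS (mem_born.1 hK).1 (hnD K hK) hσ hσK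
  by_contra hlt
  have h1 := hcard K hK σ hσ hσK
  have h2 := Finset.card_filter_le (supp0 f) (fun τ => τ ⊆ K)
  have hc : (supp0 f).card = k - j + 1 := by omega
  obtain ⟨C, hCc, hCK, hfl⟩ := supp_flower (supp0 f) hS hjk (mem_born.1 hK).1 (hnD K hK) hσ hσK hc
  apply hfM
  apply Submodule.mem_sup_right
  apply Submodule.subset_span
  refine ⟨K, C, ⟨(cA_k (by omega)).2 hK, cA_mem hK hCK (Finset.card_pos.1 (by omega)), hCc, hCK, ?_⟩,
    ?_⟩
  · intro P hP K' hK' hPK'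
    rw [cA_k (by omega)] at hK'
    have hPS : P ∈ supp0 f := by
      have : P ∈ (supp0 f : Set (Finset (Fin n))) := by rw [hfl]; exact hP
      exact this
    have h3 := hcard K' hK' P hPS hPK'
    have h4 : (supp0 f).filter (fun τ => τ ⊆ K') = supp0 f :=
      Finset.eq_of_subset_of_card_le (Finset.filter_subset _ _) (by omega)
    symm
    apply Finset.eq_of_subset_of_card_le
    · intro y hy
      by_cases hyC : y ∈ C
      · obtain ⟨w, hw, rfl⟩ := hP
        exact hPK' (Finset.mem_insert_of_mem hyC)
      · have : insert y C ∈ (supp0 f : Set (Finset (Fin n))) := by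
          rw [hfl]; exact ⟨y, Finset.mem_sdiff.2 ⟨hy, hyC⟩, rfl⟩
        rw [Finset.mem_coe, ← h4, Finset.mem_filter] at this
        exact this.2 (Finset.mem_insert_self _ _)
    · rw [(mem_born.1 hK').1, (mem_born.1 hK).1]
  · rw [← hfl]
    ext τ
    constructor
    · rintro ⟨h, h1⟩
      simp [supp0, ext0, h, h1]
    · intro h
      have hs := supp0_simplex (Finset.mem_coe.1 h)
      refine ⟨hs, ?_⟩
      rw [Finset.mem_coe, mem_supp0] at h
      simp only [ext0, hs, dif_pos] at h
      rcases zmod2_cases (f ⟨τ, hs⟩) with h5 | h5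
      · exact absurd h5 h
      · exact h5

lemma bad_support' {k j : ℕ} (hj : 1 ≤ j) {t : Finset (Fin n) → ℝ} {p : ℝ}
    (f : Cochain (complexAt k n t p) j) (hf : f ∈ cocycles (complexAt k n t p) j)
    (hng : ¬ GeneratedByMjMinus (complexAt k n t p) k j f) :
    ∃ S : Finset (Finset (Fin n)), (∀ σ ∈ S, σ.card = j + 1) ∧ MinS j S ∧
      (∀ K ∈ DD k j S, p < t K) ∧ S.Nonempty := by
  obtain ⟨f, hf, hfM, hmin, hne, hconn⟩ := min_cocycle hj (GenMod (complexAt k n t p) k j)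
    le_sup_left f hf (fun h => hng (gen_of_mem h))
  exact ⟨supp0 f, fun σ hσ => (supp0_simplex hσ).2, hmin, DD_unborn f hf, hne⟩

end Coc

/-! ### Copies of `M_j` and counting connected sets -/

section Walks

variable {n : ℕ}

/-- The petals of a flower as a finset. -/
noncomputable def petals (K C : Finset (Fin n)) : Finset (Finset (Fin n)) :=
  (K \ C).image (fun w => insert w C)

/-- The `k`-simplices other than `K` containing a petal. -/
noncomputable def AK (k : ℕ) (K C : Finset (Fin n)) : Finset (Finset (Fin n)) :=
  (allK n k).filter (fun K' => K' ≠ K ∧ ∃ P ∈ petals K C, P ⊆ K')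

lemma mem_petals {K C P : Finset (Fin n)} : P ∈ petals K C ↔ P ∈ Flower K C := by
  simp only [petals, Finset.mem_image, Flower]
  constructor
  · rintro ⟨w, hw, rfl⟩; exact ⟨w, hw, rfl⟩
  · rintro ⟨w, hw, rfl⟩; exact ⟨w, hw, rfl⟩

lemma card_of_mem_petals {K C P : Finset (Fin n)} {j : ℕ} (hC : C.card = j)
    (hP : P ∈ petals K C) : P.card = j + 1 := by
  simp only [petals, Finset.mem_image] at hP
  obtain ⟨w, hw, rfl⟩ := hP
  rw [Finset.card_insert_of_notMem (Finset.mem_sdiff.1 hw).2, hC]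

lemma card_petals {K C : Finset (Fin n)} {k j : ℕ} (hK : K.card = k + 1) (hC : C.card = j)
    (hCK : C ⊆ K) (hjk : j < k) : (petals K C).card = k - j + 1 := by
  rw [petals, Finset.card_image_of_injOn, Finset.card_sdiff_of_subset hCK, hK, hC]
  · omega
  · intro v hv w hw h
    simp only at h
    have : v ∈ insert w C := by rw [← h]; simp
    rw [Finset.mem_insert] at this
    exact this.resolve_right (Finset.mem_sdiff.1 hv).2

lemma mj_of {k j : ℕ} (hj : 1 ≤ j) (hjk : j < k) {t : Finset (Fin n) → ℝ} {p : ℝ}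
    {K C : Finset (Fin n)} {w a : Fin n} (hK : K ∈ born k t p) (hCK : C ⊆ K) (hC : C.card = j)
    (hw : w ∈ K \ C) (ha : a ∉ K) (hA : ∀ K' ∈ AK k K C, p < t K')
    (hcov : ∀ x ∈ insert w C, ∃ K' ∈ born k t p, (insert a (insert w C)).erase x ⊆ K') :
    ∃ J, IsMj (complexAt k n t p) k j K C J := by
  have hw' := Finset.mem_sdiff.1 hw
  have hPK : insert w C ⊆ K := Finset.insert_subset hw'.1 hCK
  have hPc : (insert w C).card = j + 1 := by rw [Finset.card_insert_of_notMem hw'.2, hC]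
  have haP : a ∉ insert w C := fun h => ha (hPK h)
  have hQc : (insert a (insert w C)).card = j + 2 := by
    rw [Finset.card_insert_of_notMem haP, hPc]
  have hPJ : insert w C ∈ Finset.powersetCard (j + 1) (insert a (insert w C)) :=
    Finset.mem_powersetCard.2 ⟨Finset.subset_insert _ _, hPc⟩
  refine ⟨Finset.powersetCard (j + 1) (insert a (insert w C)), ⟨⟨(cA_k (by omega)).2 hK,
    cA_mem hK hCK (Finset.card_pos.1 (by omega)), hC, hCK, ?_⟩, ⟨?_, ?_⟩, ?_⟩⟩
  · intro P hP K' hK' hPK'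
    rw [cA_k (by omega), mem_born] at hK'
    by_contra hne
    refine absurd (hA K' ?_) (not_lt.2 hK'.2)
    rw [AK, Finset.mem_filter, mem_allK]
    exact ⟨hK'.1, hne, P, mem_petals.2 hP, hPK'⟩
  · intro σ hσ
    rw [Finset.mem_powersetCard] at hσ
    refine ⟨?_, hσ.2⟩
    have hne : σ.Nonempty := Finset.card_pos.1 (by omega)
    by_cases h : ∃ x ∈ insert w C, x ∉ σ
    · obtain ⟨x, hx, hxσ⟩ := h
      obtain ⟨K', hK', hsub⟩ := hcov x hx
      refine cA_mem hK' (Finset.Subset.trans ?_ hsub) hne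
      intro y hy
      exact Finset.mem_erase.2 ⟨fun h => hxσ (h ▸ hy), hσ.1 hy⟩
    · push Not at h
      have : insert w C = σ := Finset.eq_of_subset_of_card_le h (by omega)
      rw [← this] at hne ⊢
      exact cA_mem hK hPK hne
  · intro τ hτ
    by_cases hsub : τ ⊆ insert a (insert w C)
    · have := Finset.card_filter_powersetCard_subset τ (insert a (insert w C)) (j + 1) hsub
        (by omega)
      rw [hQc, hτ] at this
      have e : (j + 2 - j).choose (j + 1 - j) = 2 := by
        rw [show j + 2 - j = 2 by omega, show j + 1 - j = 1 by omega]; rfl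
      rw [e] at this
      refine (congrArg Even (?_ : _ = 2)).mpr even_two
      convert this
    · refine (congrArg Even (?_ : _ = 0)).mpr Even.zero
      rw [Finset.card_eq_zero]
      refine Finset.eq_empty_of_forall_notMem fun σ hσ => ?_
      simp only [Finset.mem_filter] at hσ
      exact hsub (hσ.2.trans (Finset.mem_powersetCard.1 hσ.1).1)
  · refine ⟨insert w C, ⟨hPJ, w, hw, rfl⟩, ?_⟩
    rintro Q ⟨hQ, w', hw2, rfl⟩
    rw [Finset.mem_powersetCard] at hQ
    apply Finset.eq_of_subset_of_card_le
    · intro y hy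
      have hyK : y ∈ K := by
        rcases Finset.mem_insert.1 hy with h | h
        · rw [h]; exact (Finset.mem_sdiff.1 hw2).1
        · exact hCK h
      rcases Finset.mem_insert.1 (hQ.1 hy) with h | h
      · exact absurd (h ▸ hyK) ha
      · exact h
    · rw [hPc, hQ.2]

/-- Adjacency. -/
def Adj (B : Finset (Finset (Fin n))) (u v : Finset (Fin n)) : Prop :=
  ∃ K ∈ B, u ⊆ K ∧ v ⊆ K

/-- Neighbours of a `j`-simplex. -/
noncomputable def nbr (B : Finset (Finset (Fin n))) (j : ℕ) (u : Finset (Fin n)) :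
    Finset (Finset (Fin n)) :=
  if u.card = j + 1 then (B.filter (fun K => u ⊆ K)).biUnion (Finset.powersetCard (j + 1)) else ∅

/-- Walks of length `l`. -/
noncomputable def Wk (B : Finset (Finset (Fin n))) (j : ℕ) : ℕ → Finset (List (Finset (Fin n)))
  | 0 => (Finset.powersetCard (j + 1) Finset.univ).image (fun u => [u])
  | l + 1 => (Wk B j l).biUnion (fun w => (nbr B j (w.headD ∅)).image (fun v => v :: w))

lemma card_nbr {B : Finset (Finset (Fin n))} {k j Δ : ℕ} (hB : B ⊆ allK n k)
    (hΔ : ∀ σ : Finset (Fin n), σ.card = j + 1 → (B.filter (fun K => σ ⊆ K)).card ≤ Δ)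
    (u : Finset (Fin n)) : (nbr B j u).card ≤ Δ * (k + 1).choose (j + 1) := by
  unfold nbr
  split_ifs with h
  · refine (Finset.card_biUnion_le_card_mul _ _ ((k + 1).choose (j + 1)) ?_).trans
      (Nat.mul_le_mul_right _ (hΔ u h))
    intro K hK
    rw [Finset.card_powersetCard, mem_allK.1 (hB (Finset.mem_filter.1 hK).1)]
  · simp

lemma card_Wk {B : Finset (Finset (Fin n))} {k j Δ : ℕ} (hB : B ⊆ allK n k)
    (hΔ : ∀ σ : Finset (Fin n), σ.card = j + 1 → (B.filter (fun K => σ ⊆ K)).card ≤ Δ)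
    (l : ℕ) : (Wk B j l).card ≤ n.choose (j + 1) * (Δ * (k + 1).choose (j + 1)) ^ l := by
  induction l with
  | zero =>
    refine Finset.card_image_le.trans ?_
    simp
  | succ l ih =>
    refine (Finset.card_biUnion_le_card_mul _ _ (Δ * (k + 1).choose (j + 1)) ?_).trans ?_
    · intro w _
      exact Finset.card_image_le.trans (card_nbr hB hΔ _)
    · rw [pow_succ, ← mul_assoc (n.choose (j + 1))]
      exact Nat.mul_le_mul_right _ ih

lemma mem_Wk {B : Finset (Finset (Fin n))} {j : ℕ} (l : ℕ) (w : List (Finset (Fin n)))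
    (hl : w.length = l + 1) (hX : ∀ u ∈ w, u.card = j + 1) (hc : w.IsChain (Adj B)) :
    w ∈ Wk B j l := by
  induction l generalizing w with
  | zero =>
    obtain ⟨u, rfl⟩ := List.length_eq_one_iff.1 hl
    rw [Wk, Finset.mem_image]
    exact ⟨u, Finset.mem_powersetCard.2 ⟨Finset.subset_univ _, hX u (by simp)⟩, rfl⟩
  | succ l ih =>
    match w, hl, hX, hc with
    | v :: u :: w', hl, hX, hc =>
      rw [List.isChain_cons_cons] at hc
      rw [Wk, Finset.mem_biUnion]
      refine ⟨u :: w', ih _ (by simpa using hl) (fun x hx => hX x (List.mem_cons_of_mem _ hx)) hc.2,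
        ?_⟩
      rw [Finset.mem_image]
      refine ⟨v, ?_, rfl⟩
      obtain ⟨K, hK, h1, h2⟩ := hc.1
      have hu : u.card = j + 1 := hX u (by simp)
      simp only [nbr, List.headD_cons, hu, if_true]
      rw [Finset.mem_biUnion]
      exact ⟨K, Finset.mem_filter.2 ⟨hK, h2⟩, Finset.mem_powersetCard.2 ⟨h1, hX v (by simp)⟩⟩

lemma exists_walk {B S : Finset (Finset (Fin n))} (hS : Conn B S) (m : ℕ) (hm : m + 1 ≤ S.card) :
    ∃ w : List (Finset (Fin n)), w.length = 2 * m + 1 ∧ w.IsChain (Adj B) ∧ w.toFinset ⊆ S ∧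
      w.toFinset.card = m + 1 := by
  induction m with
  | zero =>
    obtain ⟨σ, hσ⟩ : S.Nonempty := Finset.card_pos.1 (by omega)
    exact ⟨[σ], by simp, by simp, by simpa using hσ, by simp⟩
  | succ m ih =>
    obtain ⟨w, h1, h2, h3, h4⟩ := ih (by omega)
    obtain ⟨u, hu, v, hv, K, hK, huK, hvK⟩ := hS w.toFinset h3
      (Finset.card_pos.1 (by omega)) (fun h => by rw [h] at h4; omega)
    rw [List.mem_toFinset] at hu
    obtain ⟨A, A', rfl⟩ := List.append_of_mem hu
    refine ⟨A ++ u :: v :: u :: A', ?_, ?_, ?_, ?_⟩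
    · simp only [List.length_append, List.length_cons] at h1 ⊢; omega
    · rw [List.isChain_split] at h2 ⊢
      refine ⟨h2.1, ?_⟩
      rw [List.isChain_cons_cons, List.isChain_cons_cons]
      exact ⟨⟨K, hK, huK, hvK⟩, ⟨K, hK, hvK, huK⟩, h2.2⟩
    · intro x hx
      by_cases hxv : x = v
      · rw [hxv]; exact (Finset.mem_sdiff.1 hv).1
      · apply h3
        simp only [List.mem_toFinset, List.mem_append, List.mem_cons] at hx ⊢
        tauto
    · have : (A ++ u :: v :: u :: A').toFinset = insert v (A ++ u :: A').toFinset := by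
        ext x
        simp only [List.mem_toFinset, List.mem_append, List.mem_cons, Finset.mem_insert]
        tauto
      rw [this, Finset.card_insert_of_notMem (Finset.mem_sdiff.1 hv).2, h4]

lemma conn_count {B : Finset (Finset (Fin n))} {k j Δ : ℕ} (hB : B ⊆ allK n k)
    (hΔ : ∀ σ : Finset (Fin n), σ.card = j + 1 → (B.filter (fun K => σ ⊆ K)).card ≤ Δ)
    (s : ℕ) (hs : 1 ≤ s) :
    ((Finset.powersetCard s (Finset.powersetCard (j + 1) Finset.univ)).filter (Conn B)).card
      ≤ n.choose (j + 1) * (Δ * (k + 1).choose (j + 1)) ^ (2 * (s - 1)) := by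
  refine le_trans ?_ (card_Wk hB hΔ (2 * (s - 1)))
  refine le_trans (Finset.card_le_card ?_) (Finset.card_image_le (f := List.toFinset))
  intro S hS
  rw [Finset.mem_filter, Finset.mem_powersetCard] at hS
  obtain ⟨⟨h1, h2⟩, h3⟩ := hS
  obtain ⟨w, hw1, hw2, hw3, hw4⟩ := exists_walk h3 (s - 1) (by omega)
  have hwS : w.toFinset = S := Finset.eq_of_subset_of_card_le hw3 (by omega)
  rw [Finset.mem_image]
  refine ⟨w, mem_Wk _ w hw1 ?_ hw2, hwS⟩
  intro u hu
  have : u ∈ S := by rw [← hwS]; simpa using hu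
  exact (Finset.mem_powersetCard.1 (h1 this)).2

end Walks

/-! ### Probability -/

section Prob

variable {n : ℕ}

instance unif_prob : IsProbabilityMeasure (volume.restrict (Set.Icc (0 : ℝ) 1)) :=
  ⟨by simp⟩

instance birth_prob : IsProbabilityMeasure (birthMeasure n) := by
  unfold birthMeasure
  infer_instance

lemma unif_Iic {p : ℝ} (h1 : p ≤ 1) :
    (volume.restrict (Set.Icc (0 : ℝ) 1)) (Set.Iic p) = ENNReal.ofReal p := by
  rw [Measure.restrict_apply measurableSet_Iic]
  have : Set.Iic p ∩ Set.Icc (0 : ℝ) 1 = Set.Icc 0 p := by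
    ext x; simp only [Set.mem_inter_iff, Set.mem_Iic, Set.mem_Icc]
    constructor
    · rintro ⟨a, b, c⟩; exact ⟨b, a⟩
    · rintro ⟨a, b⟩; exact ⟨b, a, b.trans h1⟩
  rw [this, Real.volume_Icc, sub_zero]

lemma unif_Ioi {p : ℝ} (h0 : 0 ≤ p) :
    (volume.restrict (Set.Icc (0 : ℝ) 1)) (Set.Ioi p) = ENNReal.ofReal (1 - p) := by
  rw [Measure.restrict_apply measurableSet_Ioi]
  have : Set.Ioi p ∩ Set.Icc (0 : ℝ) 1 = Set.Ioc p 1 := by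
    ext x; simp only [Set.mem_inter_iff, Set.mem_Ioi, Set.mem_Icc, Set.mem_Ioc]
    constructor
    · rintro ⟨a, b, c⟩; exact ⟨a, c⟩
    · rintro ⟨a, b⟩; exact ⟨a, (h0.trans a.le), b⟩
  rw [this, Real.volume_Ioc]

lemma bm_cyl (A B : Finset (Finset (Fin n))) (hAB : Disjoint A B) {p : ℝ} (h0 : 0 ≤ p)
    (h1 : p ≤ 1) :
    (birthMeasure n).real {t | (∀ K ∈ A, t K ≤ p) ∧ ∀ K ∈ B, p < t K}
      = p ^ A.card * (1 - p) ^ B.card := by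
  have hset : {t : Finset (Fin n) → ℝ | (∀ K ∈ A, t K ≤ p) ∧ ∀ K ∈ B, p < t K}
      = Set.pi Set.univ (fun K => if K ∈ A then Set.Iic p else if K ∈ B then Set.Ioi p
          else Set.univ) := by
    ext t
    simp only [Set.mem_pi, Set.mem_univ, true_imp_iff]
    constructor
    · rintro ⟨h1, h2⟩ K
      split_ifs with ha hb
      · exact h1 K ha
      · exact h2 K hb
      · trivial
    · intro h
      refine ⟨fun K hK => ?_, fun K hK => ?_⟩
      · have := h K; rw [if_pos hK] at this; exact this
      · have := h K
        rw [if_neg (fun h => Finset.disjoint_left.1 hAB h hK), if_pos hK] at this; exact this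
  have hm : ∀ K : Finset (Fin n), (volume.restrict (Set.Icc (0 : ℝ) 1))
      (if K ∈ A then Set.Iic p else if K ∈ B then Set.Ioi p else Set.univ)
      = ENNReal.ofReal ((if K ∈ A then p else 1) * (if K ∈ B then (1 - p) else 1)) := by
    intro K
    by_cases ha : K ∈ A
    · have hb : K ∉ B := fun h => Finset.disjoint_left.1 hAB ha h
      simp only [ha, hb, if_true, if_false, mul_one]; exact unif_Iic h1
    · by_cases hb : K ∈ B
      · simp only [ha, hb, if_true, if_false, one_mul]; exact unif_Ioi h0
      · simp [ha, hb]
  rw [measureReal_def, hset, birthMeasure, Measure.pi_pi]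
  simp only [hm]
  rw [← ENNReal.ofReal_prod_of_nonneg, ENNReal.toReal_ofReal, Finset.prod_mul_distrib]
  · simp [Finset.prod_ite]
  · apply Finset.prod_nonneg
    intro K _
    apply mul_nonneg <;> split_ifs <;> linarith
  · intro K _
    apply mul_nonneg <;> split_ifs <;> linarith

lemma bm_indep (D : Finset (Finset (Fin n))) {E F : Set (Finset (Fin n) → ℝ)}
    (hE : MeasurableSet E) (hF : MeasurableSet F)
    (hE' : ∀ t t' : Finset (Fin n) → ℝ, (∀ K, K ∉ D → t K = t' K) → t ∈ E → t' ∈ E)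
    (hF' : ∀ t t' : Finset (Fin n) → ℝ, (∀ K, K ∈ D → t K = t' K) → t ∈ F → t' ∈ F) :
    (birthMeasure n).real (E ∩ F) = (birthMeasure n).real E * (birthMeasure n).real F := by
  have hi : ProbabilityTheory.iIndepFun
      (fun (K : Finset (Fin n)) (t : Finset (Fin n) → ℝ) => t K) (birthMeasure n) := by
    have := ProbabilityTheory.iIndepFun_pi
      (μ := fun _ : Finset (Fin n) => volume.restrict (Set.Icc (0 : ℝ) 1))
      (X := fun _ (x : ℝ) => x) (fun _ => aemeasurable_id)
    exact this
  have hind := hi.indepFun_finset Dᶜ D disjoint_compl_left (fun K => measurable_pi_apply K)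
  set eE : ((K : (Dᶜ : Finset (Finset (Fin n)))) → ℝ) → (Finset (Fin n) → ℝ) :=
    fun x K => if h : K ∈ Dᶜ then x ⟨K, h⟩ else 0 with heE
  set eF : ((K : D) → ℝ) → (Finset (Fin n) → ℝ) :=
    fun x K => if h : K ∈ D then x ⟨K, h⟩ else 0 with heF
  have hmE : Measurable eE := by
    apply measurable_pi_lambda
    intro K
    by_cases h : K ∈ Dᶜ
    · simp only [heE, h, dif_pos]; exact measurable_pi_apply _
    · simp only [heE, h, dif_neg, not_false_eq_true]; exact measurable_const
  have hmF : Measurable eF := by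
    apply measurable_pi_lambda
    intro K
    by_cases h : K ∈ D
    · simp only [heF, h, dif_pos]; exact measurable_pi_apply _
    · simp only [heF, h, dif_neg, not_false_eq_true]; exact measurable_const
  have h := hind.measure_inter_preimage_eq_mul (eE ⁻¹' E) (eF ⁻¹' F) (hmE hE) (hmF hF)
  have e1 : (fun (t : Finset (Fin n) → ℝ) (K : (Dᶜ : Finset (Finset (Fin n)))) => t K) ⁻¹'
      (eE ⁻¹' E) = E := by
    ext t
    simp only [Set.mem_preimage]
    constructor
    · apply hE'
      intro K hK
      simp [heE, hK]
    · apply hE'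
      intro K hK
      simp [heE, hK]
  have e2 : (fun (t : Finset (Fin n) → ℝ) (K : D) => t K) ⁻¹' (eF ⁻¹' F) = F := by
    ext t
    simp only [Set.mem_preimage]
    constructor
    · apply hF'
      intro K hK
      simp [heF, hK]
    · apply hF'
      intro K hK
      simp [heF, hK]
  rw [e1, e2] at h
  simp only [measureReal_def, h, ENNReal.toReal_mul]

lemma meas_born (k : ℕ) (p : ℝ) (Φ : Finset (Finset (Fin n)) → Prop) :
    MeasurableSet {t : Finset (Fin n) → ℝ | Φ (born k t p)} := by
  have h1 : ∀ B : Finset (Finset (Fin n)),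
      MeasurableSet {t : Finset (Fin n) → ℝ | born k t p = B} := by
    intro B
    have : {t : Finset (Fin n) → ℝ | born k t p = B}
        = ⋂ K : Finset (Fin n), {t | (K.card = k + 1 ∧ t K ≤ p) ↔ K ∈ B} := by
      ext t
      simp only [Set.mem_iInter]
      change born k t p = B ↔ ∀ K : Finset (Fin n), (K.card = k + 1 ∧ t K ≤ p) ↔ K ∈ B
      rw [Finset.ext_iff]
      simp only [mem_born]
    rw [this]
    apply MeasurableSet.iInter
    intro K
    have hm : MeasurableSet {t : Finset (Fin n) → ℝ | t K ≤ p} :=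
      measurableSet_le (measurable_pi_apply K) measurable_const
    exact ((MeasurableSet.const _).inter hm).iff (MeasurableSet.const _)
  have : {t : Finset (Fin n) → ℝ | Φ (born k t p)}
      = ⋃ B : {B : Finset (Finset (Fin n)) // Φ B}, {t | born k t p = B.1} := by
    ext t
    simp only [Set.mem_iUnion]
    constructor
    · intro h; exact ⟨⟨_, h⟩, rfl⟩
    · rintro ⟨B, hB⟩
      change Φ (born k t p)
      rw [show born k t p = B.1 from hB]; exact B.2
  rw [this]
  exact MeasurableSet.iUnion fun B => h1 B.1

lemma meas_unborn (D : Finset (Finset (Fin n))) (p : ℝ) :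
    MeasurableSet {t : Finset (Fin n) → ℝ | ∀ K ∈ D, p < t K} := by
  have : {t : Finset (Fin n) → ℝ | ∀ K ∈ D, p < t K} = ⋂ K ∈ D, {t | p < t K} := by
    ext t; simp
  rw [this]
  exact D.measurableSet_biInter fun K _ => measurableSet_lt measurable_const (measurable_pi_apply K)

/-- Degree bound. -/
def Deg (j : ℕ) (B : Finset (Finset (Fin n))) (Δ : ℕ) : Prop :=
  ∀ σ : Finset (Fin n), σ.card = j + 1 → (B.filter (fun K => σ ⊆ K)).card ≤ Δ

lemma conn_prob {k j Δ : ℕ} {p p' : ℝ} (h0 : 0 ≤ p) (h1 : p ≤ 1)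
    (hdeg : 1 / 2 ≤ (birthMeasure n).real {t | Deg j (born k t p') Δ})
    (D S : Finset (Finset (Fin n))) :
    (birthMeasure n).real {t | (∀ K ∈ D, p < t K) ∧ Conn (born k t p' \ D) S ∧
        Deg j (born k t p' \ D) Δ}
      ≤ 2 * (1 - p) ^ D.card * (birthMeasure n).real
        {t | Conn (born k t p') S ∧ Deg j (born k t p') (2 * Δ)} := by
  set μ := birthMeasure n
  set E := {t : Finset (Fin n) → ℝ | Conn (born k t p' \ D) S ∧ Deg j (born k t p' \ D) Δ}
  set F := {t : Finset (Fin n) → ℝ | ∀ K ∈ D, p < t K}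
  set Q := {t : Finset (Fin n) → ℝ | Deg j (born k t p' ∩ D) Δ}
  have mE : MeasurableSet E := meas_born k p' (fun B => Conn (B \ D) S ∧ Deg j (B \ D) Δ)
  have mF : MeasurableSet F := meas_unborn D p
  have mQ : MeasurableSet Q := meas_born k p' (fun B => Deg j (B ∩ D) Δ)
  have dE : ∀ t t' : Finset (Fin n) → ℝ, (∀ K, K ∉ D → t K = t' K) → t ∈ E → t' ∈ E := by
    intro t t' h ht
    have : born k t p' \ D = born k t' p' \ D := by
      ext K
      simp only [Finset.mem_sdiff, mem_born]
      by_cases hK : K ∈ D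
      · simp [hK]
      · rw [h K hK]
    change Conn (born k t' p' \ D) S ∧ Deg j (born k t' p' \ D) Δ
    rw [← this]; exact ht
  have dF : ∀ t t' : Finset (Fin n) → ℝ, (∀ K, K ∈ D → t K = t' K) → t ∈ F → t' ∈ F := by
    intro t t' h ht K hK
    rw [← h K hK]; exact ht K hK
  have dQ : ∀ t t' : Finset (Fin n) → ℝ, (∀ K, K ∈ D → t K = t' K) → t ∈ Q → t' ∈ Q := by
    intro t t' h ht
    have : born k t p' ∩ D = born k t' p' ∩ D := by
      ext K
      simp only [Finset.mem_inter, mem_born]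
      by_cases hK : K ∈ D
      · rw [h K hK]
      · simp [hK]
    change Deg j (born k t' p' ∩ D) Δ
    rw [← this]; exact ht
  have hEF := bm_indep D mE mF dE dF
  have hEQ := bm_indep D mE mQ dE dQ
  have hF : μ.real F = (1 - p) ^ D.card := by
    have := bm_cyl (n := n) ∅ D (by simp) h0 h1
    simpa using this
  have hQ : 1 / 2 ≤ μ.real Q := by
    refine hdeg.trans (measureReal_mono ?_)
    intro t ht σ hσ
    refine le_trans (Finset.card_le_card ?_) (ht σ hσ)
    intro K hK
    simp only [Finset.mem_filter, Finset.mem_inter] at hK ⊢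
    exact ⟨hK.1.1, hK.2⟩
  have hsub : μ.real (E ∩ Q) ≤ μ.real {t | Conn (born k t p') S ∧ Deg j (born k t p') (2 * Δ)} := by
    refine measureReal_mono ?_
    rintro t ⟨⟨h2, h3⟩, h4⟩
    refine ⟨h2.mono Finset.sdiff_subset, ?_⟩
    intro σ hσ
    have h5 := h3 σ hσ
    have h6 := h4 σ hσ
    have : (born k t p').filter (fun K => σ ⊆ K) ⊆
        (born k t p' \ D).filter (fun K => σ ⊆ K) ∪ (born k t p' ∩ D).filter (fun K => σ ⊆ K) := by
      intro K hK
      simp only [Finset.mem_union, Finset.mem_filter, Finset.mem_inter, Finset.mem_sdiff] at hK ⊢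
      tauto
    have h7 := (Finset.card_le_card this).trans (Finset.card_union_le _ _)
    omega
  have hset : {t : Finset (Fin n) → ℝ | (∀ K ∈ D, p < t K) ∧ Conn (born k t p' \ D) S ∧
        Deg j (born k t p' \ D) Δ} = E ∩ F := by
    ext t
    change _ ∧ _ ↔ (Conn (born k t p' \ D) S ∧ Deg j (born k t p' \ D) Δ) ∧ (∀ K ∈ D, p < t K)
    exact and_comm
  rw [hset, hEF, hF]
  have hE2 : μ.real E ≤ 2 * μ.real (E ∩ Q) := by
    rw [hEQ]
    nlinarith [measureReal_nonneg (μ := μ) (s := E)]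
  have hq : 0 ≤ (1 - p) ^ D.card := pow_nonneg (by linarith) _
  calc μ.real E * (1 - p) ^ D.card ≤ (2 * μ.real (E ∩ Q)) * (1 - p) ^ D.card := by gcongr
    _ ≤ (2 * μ.real {t | Conn (born k t p') S ∧ Deg j (born k t p') (2 * Δ)}) *
        (1 - p) ^ D.card := by gcongr
    _ = _ := by ring

lemma sum_measure_le {Ω ι : Type*} [MeasurableSpace Ω] (μ : Measure Ω) [IsProbabilityMeasure μ]
    (I : Finset ι) (A : ι → Set Ω) (hA : ∀ i ∈ I, MeasurableSet (A i)) (c : ℝ)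
    (hc : ∀ ω, ((I.filter (fun i => ω ∈ A i)).card : ℝ) ≤ c) :
    ∑ i ∈ I, μ.real (A i) ≤ c := by
  have h1 : ∑ i ∈ I, μ.real (A i) = ∫ ω, ∑ i ∈ I, (A i).indicator (fun _ => (1 : ℝ)) ω ∂μ := by
    rw [integral_finsetSum]
    · apply Finset.sum_congr rfl
      intro i hi
      rw [integral_indicator_const _ (hA i hi)]; simp
    · intro i hi
      exact (integrable_const (1 : ℝ)).indicator (hA i hi)
  rw [h1]
  calc ∫ ω, ∑ i ∈ I, (A i).indicator (fun _ => (1 : ℝ)) ω ∂μ ≤ ∫ _, c ∂μ := by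
        apply integral_mono
        · apply integrable_finsetSum
          intro i hi
          exact (integrable_const (1 : ℝ)).indicator (hA i hi)
        · exact integrable_const c
        · intro ω
          refine le_trans (le_of_eq ?_) (hc ω)
          simp [Set.indicator_apply, Finset.sum_boole]
    _ = c := by simp

lemma second_moment {Ω ι : Type*} [MeasurableSpace Ω] (μ : Measure Ω) [IsProbabilityMeasure μ]
    (I : Finset ι) (A : ι → Set Ω) (hA : ∀ i ∈ I, MeasurableSet (A i)) (m c : ℝ)
    (hm : m = ∑ i ∈ I, μ.real (A i)) (hm0 : 0 < m)
    (h2 : ∑ i ∈ I, ∑ i' ∈ I, μ.real (A i ∩ A i') ≤ m + c * m ^ 2) :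
    μ.real {ω | ∀ i ∈ I, ω ∉ A i} ≤ 1 / m + (c - 1) := by
  set X : Ω → ℝ := fun ω => ∑ i ∈ I, (A i).indicator (fun _ => (1 : ℝ)) ω with hX
  have hIntg : ∀ s : Set Ω, MeasurableSet s → Integrable (s.indicator (fun _ => (1 : ℝ))) μ :=
    fun s hs => (integrable_const (1 : ℝ)).indicator hs
  have iX : Integrable X μ := integrable_finsetSum _ fun i hi => hIntg _ (hA i hi)
  have eX : ∫ ω, X ω ∂μ = m := by
    rw [hm, hX, integral_finsetSum _ fun i hi => hIntg _ (hA i hi)]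
    apply Finset.sum_congr rfl
    intro i hi
    rw [integral_indicator_const _ (hA i hi)]; simp
  have hsq : ∀ ω, X ω ^ 2 = ∑ i ∈ I, ∑ i' ∈ I, (A i ∩ A i').indicator (fun _ => (1 : ℝ)) ω := by
    intro ω
    rw [hX, sq, Finset.sum_mul_sum]
    apply Finset.sum_congr rfl; intro i _
    apply Finset.sum_congr rfl; intro i' _
    by_cases h1 : ω ∈ A i <;> by_cases h2 : ω ∈ A i' <;> simp [h1, h2]
  have iX2 : Integrable (fun ω => X ω ^ 2) μ := by
    simp only [hsq]
    exact integrable_finsetSum _ fun i hi => integrable_finsetSum _ fun i' hi' =>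
      hIntg _ ((hA i hi).inter (hA i' hi'))
  have eX2 : ∫ ω, X ω ^ 2 ∂μ ≤ m + c * m ^ 2 := by
    refine le_trans (le_of_eq ?_) h2
    simp only [hsq]
    rw [integral_finsetSum _ fun i hi => integrable_finsetSum _ fun i' hi' =>
      hIntg _ ((hA i hi).inter (hA i' hi'))]
    apply Finset.sum_congr rfl; intro i hi
    rw [integral_finsetSum _ fun i' hi' => hIntg _ ((hA i hi).inter (hA i' hi'))]
    apply Finset.sum_congr rfl; intro i' hi'
    rw [integral_indicator_const _ ((hA i hi).inter (hA i' hi'))]; simp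
  set Z := {ω | ∀ i ∈ I, ω ∉ A i} with hZ
  have mZ : MeasurableSet Z := by
    have : Z = ⋂ i ∈ I, (A i)ᶜ := by ext ω; simp [hZ]
    rw [this]
    exact I.measurableSet_biInter fun i hi => (hA i hi).compl
  have h3 : m ^ 2 * μ.real Z ≤ ∫ ω, (X ω - m) ^ 2 ∂μ := by
    have : m ^ 2 * μ.real Z = ∫ ω, Z.indicator (fun _ => m ^ 2) ω ∂μ := by
      rw [integral_indicator_const _ mZ]; simp [mul_comm]
    rw [this]
    apply integral_mono
    · exact (integrable_const (m ^ 2)).indicator mZ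
    · have : (fun ω => (X ω - m) ^ 2) = fun ω => X ω ^ 2 - 2 * m * X ω + m ^ 2 := by
        funext ω; ring
      rw [this]
      exact (iX2.sub (iX.const_mul _)).add (integrable_const _)
    · intro ω
      by_cases h : ω ∈ Z
      · have h0 : X ω = 0 := by
          rw [hX]
          apply Finset.sum_eq_zero
          intro i hi
          exact Set.indicator_of_notMem (h i hi) _
        simp [h, h0]
      · simp only [h, Set.indicator_of_notMem, not_false_eq_true]
        positivity
  have h4 : ∫ ω, (X ω - m) ^ 2 ∂μ = ∫ ω, X ω ^ 2 ∂μ - 2 * m * m + m ^ 2 := by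
    have : (fun ω => (X ω - m) ^ 2) = fun ω => X ω ^ 2 - 2 * m * X ω + m ^ 2 := by
      funext ω; ring
    have e1 : ∫ ω, ((X ω ^ 2 - 2 * m * X ω) + m ^ 2) ∂μ
        = ∫ ω, (X ω ^ 2 - 2 * m * X ω) ∂μ + ∫ _, m ^ 2 ∂μ :=
      integral_add (iX2.sub (iX.const_mul (2 * m))) (integrable_const _)
    have e2 : ∫ ω, (X ω ^ 2 - 2 * m * X ω) ∂μ = ∫ ω, X ω ^ 2 ∂μ - ∫ ω, 2 * m * X ω ∂μ :=
      integral_sub iX2 (iX.const_mul (2 * m))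
    rw [this, e1, e2, integral_const_mul, eX]
    simp
  rw [h4] at h3
  have h5 : m ^ 2 * μ.real Z ≤ m + (c - 1) * m ^ 2 := by nlinarith
  have : μ.real Z ≤ (m + (c - 1) * m ^ 2) / m ^ 2 := by
    rw [le_div_iff₀ (by positivity)]; linarith
  refine this.trans (le_of_eq ?_)
  field_simp

end Prob

/-! ### Bounds on the bad events -/

section Bounds

variable {n : ℕ}

lemma deg_tail {k j Δ : ℕ} (hjk : j < k) {p : ℝ} (h0 : 0 ≤ p) (h1 : p ≤ 1) :
    (birthMeasure n).real {t | ¬ Deg j (born k t p) Δ}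
      ≤ n.choose (j + 1) * (((cb n k (j + 1) : ℝ) * p) ^ (Δ + 1) / (Nat.factorial (Δ + 1))) := by
  set μ := birthMeasure n
  set X := Finset.powersetCard (j + 1) (Finset.univ : Finset (Fin n))
  have hsub : {t | ¬ Deg j (born k t p) Δ} ⊆
      ⋃ σ ∈ X, ⋃ R ∈ Finset.powersetCard (Δ + 1) (starK n k σ),
        {t : Finset (Fin n) → ℝ | (∀ K ∈ R, t K ≤ p) ∧ ∀ K ∈ (∅ : Finset (Finset (Fin n))), p < t K} := by
    intro t ht
    have ht : ¬ Deg j (born k t p) Δ := ht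
    unfold Deg at ht
    push Not at ht
    obtain ⟨σ, hσ, hc⟩ := ht
    obtain ⟨R, hR, hRc⟩ := Finset.exists_subset_card_eq (Nat.succ_le_of_lt hc)
    simp only [Set.mem_iUnion]
    refine ⟨σ, by simp [X, Finset.mem_powersetCard, hσ], R, ?_, ?_, by simp⟩
    · rw [Finset.mem_powersetCard]
      refine ⟨fun K hK => ?_, hRc⟩
      have := Finset.mem_filter.1 (hR hK)
      rw [mem_born] at this
      exact mem_starK.2 ⟨this.1.1, this.2⟩
    · intro K hK
      have := Finset.mem_filter.1 (hR hK)
      rw [mem_born] at this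
      exact this.1.2
  calc μ.real {t | ¬ Deg j (born k t p) Δ} ≤ _ := measureReal_mono hsub (measure_ne_top _ _)
    _ ≤ ∑ σ ∈ X, μ.real (⋃ R ∈ Finset.powersetCard (Δ + 1) (starK n k σ),
        {t : Finset (Fin n) → ℝ | (∀ K ∈ R, t K ≤ p) ∧
          ∀ K ∈ (∅ : Finset (Finset (Fin n))), p < t K}) :=
        measureReal_biUnion_finset_le _ _
    _ ≤ ∑ σ ∈ X, (((cb n k (j + 1) : ℝ) * p) ^ (Δ + 1) / (Nat.factorial (Δ + 1))) := by
        apply Finset.sum_le_sum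
        intro σ hσ
        have hσ' : σ.card = j + 1 := (Finset.mem_powersetCard.1 hσ).2
        refine (measureReal_biUnion_finset_le _ _).trans ?_
        have : ∀ R ∈ Finset.powersetCard (Δ + 1) (starK n k σ),
            μ.real {t : Finset (Fin n) → ℝ | (∀ K ∈ R, t K ≤ p) ∧
              ∀ K ∈ (∅ : Finset (Finset (Fin n))), p < t K} = p ^ (Δ + 1) := by
          intro R hR
          rw [bm_cyl R ∅ (by simp) h0 h1, (Finset.mem_powersetCard.1 hR).2]
          simp
        rw [Finset.sum_congr rfl this, Finset.sum_const, Finset.card_powersetCard,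
          card_starK σ (by omega), hσ', nsmul_eq_mul, mul_pow, mul_div_right_comm]
        gcongr
        exact Nat.choose_le_pow_div _ _
    _ = _ := by
        rw [Finset.sum_const, nsmul_eq_mul]
        simp [X]

lemma bad1_le {k j Δ : ℕ} {p p' : ℝ} (h0 : 0 ≤ p) (h1 : p ≤ 1) (h : ℕ → ℝ)
    (hdeg : 1 / 2 ≤ (birthMeasure n).real {t | Deg j (born k t p') Δ})
    (hh : ∀ S : Finset (Finset (Fin n)), (∀ σ ∈ S, σ.card = j + 1) → MinS j S →
      k - j + 2 ≤ S.card → (1 - p) ^ (DD k j S).card ≤ h S.card)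
    (hh0 : ∀ s, 0 ≤ h s) :
    (birthMeasure n).real {t | ∃ S : Finset (Finset (Fin n)), (∀ σ ∈ S, σ.card = j + 1) ∧
      MinS j S ∧ (∀ K ∈ DD k j S, p < t K) ∧ Conn (born k t p' \ DD k j S) S ∧
      k - j + 2 ≤ S.card}
      ≤ (birthMeasure n).real {t | ¬ Deg j (born k t p') Δ} +
        ∑ s ∈ Finset.Icc (k - j + 2) (n.choose (j + 1)),
          2 * h s * (n.choose (j + 1) * ((2 * Δ : ℕ) * (k + 1).choose (j + 1) : ℝ) ^ (2 * (s - 1))) := by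
  set μ := birthMeasure n
  set X := Finset.powersetCard (j + 1) (Finset.univ : Finset (Fin n)) with hX
  have hXc : X.card = n.choose (j + 1) := by simp [X]
  set E : Finset (Finset (Fin n)) → Set (Finset (Fin n) → ℝ) := fun S =>
    {t | (∀ K ∈ DD k j S, p < t K) ∧ Conn (born k t p' \ DD k j S) S ∧
        Deg j (born k t p' \ DD k j S) Δ} with hE
  set Y : ℕ → Finset (Finset (Finset (Fin n))) := fun s =>
    (Finset.powersetCard s X).filter (MinS j) with hY
  have hsub : {t | ∃ S : Finset (Finset (Fin n)), (∀ σ ∈ S, σ.card = j + 1) ∧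
      MinS j S ∧ (∀ K ∈ DD k j S, p < t K) ∧ Conn (born k t p' \ DD k j S) S ∧
      k - j + 2 ≤ S.card} ⊆ {t | ¬ Deg j (born k t p') Δ} ∪
        ⋃ s ∈ Finset.Icc (k - j + 2) (n.choose (j + 1)), ⋃ S ∈ Y s, E S := by
    rintro t ⟨S, hS, hmin, hun, hconn, hc⟩
    by_cases hd : Deg j (born k t p') Δ
    · right
      have hSX : S ⊆ X := fun σ hσ => by
        rw [hX, Finset.mem_powersetCard]; exact ⟨Finset.subset_univ _, hS σ hσ⟩
      simp only [Set.mem_iUnion]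
      refine ⟨S.card, Finset.mem_Icc.2 ⟨hc, hXc ▸ Finset.card_le_card hSX⟩, S, ?_, hun, hconn, ?_⟩
      · rw [hY]; exact Finset.mem_filter.2 ⟨Finset.mem_powersetCard.2 ⟨hSX, rfl⟩, hmin⟩
      · intro σ hσ
        refine le_trans (Finset.card_le_card ?_) (hd σ hσ)
        exact Finset.filter_subset_filter _ Finset.sdiff_subset
    · left; exact hd
  refine (measureReal_mono hsub (measure_ne_top _ _)).trans ((measureReal_union_le _ _).trans ?_)
  gcongr
  refine (measureReal_biUnion_finset_le _ _).trans ?_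
  apply Finset.sum_le_sum
  intro s hs
  have hs := Finset.mem_Icc.1 hs
  refine (measureReal_biUnion_finset_le _ _).trans ?_
  set A : Finset (Finset (Fin n)) → Set (Finset (Fin n) → ℝ) := fun S =>
    {t | Conn (born k t p') S ∧ Deg j (born k t p') (2 * Δ)} with hA
  have hYm : ∀ S ∈ Y s, (∀ σ ∈ S, σ.card = j + 1) ∧ MinS j S ∧ S.card = s := by
    intro S hS
    have hS := Finset.mem_filter.1 hS
    have h2 := Finset.mem_powersetCard.1 hS.1
    exact ⟨fun σ hσ => (Finset.mem_powersetCard.1 (h2.1 hσ)).2, hS.2, h2.2⟩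
  calc ∑ S ∈ Y s, μ.real (E S) ≤ ∑ S ∈ Y s, 2 * h s * μ.real (A S) := by
        apply Finset.sum_le_sum
        intro S hS
        obtain ⟨hS1, hS2, hS3⟩ := hYm S hS
        refine (conn_prob h0 h1 hdeg (DD k j S) S).trans ?_
        have := hh S hS1 hS2 (by omega)
        rw [hS3] at this
        gcongr
    _ = 2 * h s * ∑ S ∈ Y s, μ.real (A S) := by rw [Finset.mul_sum]
    _ ≤ _ := by
        have := hh0 s
        gcongr
        apply sum_measure_le
        · intro S _
          exact meas_born k p' (fun B => Conn B S ∧ Deg j B (2 * Δ))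
        · intro t
          by_cases hd : Deg j (born k t p') (2 * Δ)
          · have hB : born k t p' ⊆ allK n k := fun K hK => by
              rw [mem_born] at hK; exact mem_allK.2 hK.1
            have hcc := conn_count (k := k) (j := j) (Δ := 2 * Δ) hB hd (s := s) (by omega)
            have hle : ((Y s).filter (fun S => t ∈ A S)).card ≤
                n.choose (j + 1) * ((2 * Δ) * (k + 1).choose (j + 1)) ^ (2 * (s - 1)) := by
              refine le_trans (Finset.card_le_card ?_) hcc
              intro S hS
              have hS := Finset.mem_filter.1 hS
              have h1 := Finset.mem_filter.1 hS.1
              exact Finset.mem_filter.2 ⟨h1.1, hS.2.1⟩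
            have hle2 : (((Y s).filter (fun S => t ∈ A S)).card : ℝ) ≤ n.choose (j + 1) *
                ((2 * Δ : ℕ) * (k + 1).choose (j + 1) : ℝ) ^ (2 * (s - 1)) := by
              exact_mod_cast hle
            convert hle2 using 3
            ext S; simp only [Finset.mem_filter]
          · have : (Y s).filter (fun S => t ∈ A S) = ∅ := by
              rw [Finset.filter_eq_empty_iff]
              intro S _ hS
              exact hd hS.2
            have hle2 : (((Y s).filter (fun S => t ∈ A S)).card : ℝ) ≤ n.choose (j + 1) *
                ((2 * Δ : ℕ) * (k + 1).choose (j + 1) : ℝ) ^ (2 * (s - 1)) := by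
              rw [this, Finset.card_empty]
              push_cast
              positivity
            convert hle2 using 3
            ext S; simp only [Finset.mem_filter]

lemma bad2_le {k j : ℕ} {p x : ℝ} (h0 : 0 ≤ p) (h1 : p ≤ 1) (hx : 0 ≤ x)
    (hh : ∀ S : Finset (Finset (Fin n)), (∀ σ ∈ S, σ.card = j + 1) → MinS j S →
      (1 - p) ^ (DD k j S).card ≤ x ^ S.card) :
    (birthMeasure n).real {t | ∃ S : Finset (Finset (Fin n)), (∀ σ ∈ S, σ.card = j + 1) ∧
      MinS j S ∧ (∀ K ∈ DD k j S, p < t K) ∧ S.Nonempty}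
      ≤ (1 + x) ^ (n.choose (j + 1)) - 1 := by
  set μ := birthMeasure n
  set X := Finset.powersetCard (j + 1) (Finset.univ : Finset (Fin n)) with hX
  have hXc : X.card = n.choose (j + 1) := by simp [X]
  set Y := (X.powerset.erase ∅).filter (MinS j) with hY
  have hsub : {t | ∃ S : Finset (Finset (Fin n)), (∀ σ ∈ S, σ.card = j + 1) ∧
      MinS j S ∧ (∀ K ∈ DD k j S, p < t K) ∧ S.Nonempty} ⊆
      ⋃ S ∈ Y, {t : Finset (Fin n) → ℝ | (∀ K ∈ (∅ : Finset (Finset (Fin n))), t K ≤ p) ∧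
        ∀ K ∈ DD k j S, p < t K} := by
    rintro t ⟨S, hS, hmin, hun, hne⟩
    simp only [Set.mem_iUnion]
    refine ⟨S, ?_, by simp, hun⟩
    rw [hY, Finset.mem_filter, Finset.mem_erase, Finset.mem_powerset]
    refine ⟨⟨hne.ne_empty, fun σ hσ => ?_⟩, hmin⟩
    rw [hX, Finset.mem_powersetCard]; exact ⟨Finset.subset_univ _, hS σ hσ⟩
  refine (measureReal_mono hsub (measure_ne_top _ _)).trans ((measureReal_biUnion_finset_le _ _).trans ?_)
  calc _ ≤ ∑ S ∈ Y, x ^ S.card := by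
        apply Finset.sum_le_sum
        intro S hS
        rw [bm_cyl _ _ (by simp) h0 h1]
        rw [hY, Finset.mem_filter, Finset.mem_erase, Finset.mem_powerset] at hS
        simpa using hh S (fun σ hσ => (Finset.mem_powersetCard.1 (hS.1.2 hσ)).2) hS.2
    _ ≤ ∑ S ∈ X.powerset.erase ∅, x ^ S.card := by
        apply Finset.sum_le_sum_of_subset_of_nonneg (Finset.filter_subset _ _)
        intros; positivity
    _ = (∑ S ∈ X.powerset, x ^ S.card) - 1 := by
        have := Finset.sum_erase_add X.powerset (fun S => x ^ S.card) (Finset.empty_mem_powerset X)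
        simp only [Finset.card_empty, pow_zero] at this
        linarith
    _ = _ := by
        have := Finset.sum_pow_mul_eq_add_pow x 1 X
        simp only [one_pow, mul_one] at this
        rw [this, hXc, add_comm]

lemma card_AK_le {k j : ℕ} (hjk : j < k) {K C : Finset (Fin n)} (hK : K.card = k + 1)
    (hC : C.card = j) (hCK : C ⊆ K) : (AK k K C).card ≤ (k - j + 1) * cb n k (j + 1) := by
  have hsub : AK k K C ⊆ (petals K C).biUnion (starK n k) := by
    intro K' hK'
    rw [AK, Finset.mem_filter, mem_allK] at hK'
    obtain ⟨h1, _, P, hP, hPK⟩ := hK'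
    exact Finset.mem_biUnion.2 ⟨P, hP, mem_starK.2 ⟨h1, hPK⟩⟩
  refine (Finset.card_le_card hsub).trans ?_
  rw [← card_petals hK hC hCK hjk]
  apply Finset.card_biUnion_le_card_mul
  intro P hP
  have := card_of_mem_petals hC hP
  exact card_starK_le P (by omega) (by omega)

lemma card_AK_inter_le {k j : ℕ} (hjk : j < k) {K C K' C' : Finset (Fin n)} (hK : K.card = k + 1)
    (hC : C.card = j) (hCK : C ⊆ K) (hK' : K'.card = k + 1)
    (hC' : C'.card = j) (hCK' : C' ⊆ K') (hd : Disjoint (petals K C) (petals K' C')) :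
    (AK k K C ∩ AK k K' C').card ≤ (k - j + 1) ^ 2 * cb n k (j + 2) := by
  have hsub : AK k K C ∩ AK k K' C' ⊆ (petals K C ×ˢ petals K' C').biUnion
      (fun x => starK n k (x.1 ∪ x.2)) := by
    intro K'' h
    rw [Finset.mem_inter, AK, AK, Finset.mem_filter, Finset.mem_filter, mem_allK] at h
    obtain ⟨⟨h1, _, P, hP, hPK⟩, ⟨_, _, P', hP', hPK'⟩⟩ := h
    exact Finset.mem_biUnion.2 ⟨(P, P'), Finset.mem_product.2 ⟨hP, hP'⟩,
      mem_starK.2 ⟨h1, Finset.union_subset hPK hPK'⟩⟩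
  refine (Finset.card_le_card hsub).trans ?_
  have hc : (petals K C ×ˢ petals K' C').card = (k - j + 1) ^ 2 := by
    rw [Finset.card_product, card_petals hK hC hCK hjk, card_petals hK' hC' hCK' hjk, sq]
  rw [← hc]
  apply Finset.card_biUnion_le_card_mul
  rintro ⟨P, P'⟩ hP
  have hP := Finset.mem_product.1 hP
  have e1 := card_of_mem_petals hC hP.1
  have e2 := card_of_mem_petals hC' hP.2
  simp only at e1 e2
  refine card_starK_le (P ∪ P') ?_ (by omega)
  by_contra hlt
  have hle : (P ∪ P').card ≤ P.card := by omega
  have h1 : P = P ∪ P' := Finset.eq_of_subset_of_card_le Finset.subset_union_left hle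
  have h2 : P' = P := by
    apply Finset.eq_of_subset_of_card_le
    · rw [h1]; exact Finset.subset_union_right
    · omega
  exact Finset.disjoint_left.1 hd hP.1 (by have := hP.2; simp only at this; rwa [h2] at this)

/-- The event that `(K,C)` is a copy of `M_j^-`. -/
def EK (k : ℕ) (p : ℝ) (K C : Finset (Fin n)) : Set (Finset (Fin n) → ℝ) :=
  {t | (∀ K' ∈ ({K} : Finset (Finset (Fin n))), t K' ≤ p) ∧ ∀ K' ∈ AK k K C, p < t K'}

lemma notMem_AK {k : ℕ} {K C : Finset (Fin n)} : K ∉ AK k K C := by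
  simp [AK]

lemma meas_cyl (A B : Finset (Finset (Fin n))) (p : ℝ) :
    MeasurableSet {t : Finset (Fin n) → ℝ | (∀ K ∈ A, t K ≤ p) ∧ ∀ K ∈ B, p < t K} := by
  have : {t : Finset (Fin n) → ℝ | (∀ K ∈ A, t K ≤ p) ∧ ∀ K ∈ B, p < t K} =
      (⋂ K ∈ A, {t | t K ≤ p}) ∩ {t | ∀ K ∈ B, p < t K} := by
    ext t; simp
  rw [this]
  exact (A.measurableSet_biInter fun K _ =>
    measurableSet_le (measurable_pi_apply K) measurable_const).inter (meas_unborn B p)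

lemma EK_real {k : ℕ} {p : ℝ} (h0 : 0 ≤ p) (h1 : p ≤ 1) (K C : Finset (Fin n)) :
    (birthMeasure n).real (EK k p K C) = p * (1 - p) ^ (AK k K C).card := by
  rw [EK, bm_cyl _ _ (by simp [notMem_AK]) h0 h1]
  simp

lemma EK_inter {k j : ℕ} (hjk : j < k) {p : ℝ} (h0 : 0 ≤ p) (h1 : p ≤ 1)
    {K C K' C' : Finset (Fin n)} (hK : K.card = k + 1)
    (hC : C.card = j) (hCK : C ⊆ K) (hK' : K'.card = k + 1)
    (hC' : C'.card = j) (hCK' : C' ⊆ K') (hne : K ≠ K') :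
    (birthMeasure n).real (EK k p K C ∩ EK k p K' C') * (1 - p) ^ ((k - j + 1) ^ 2 * cb n k (j + 2))
      ≤ (birthMeasure n).real (EK k p K C) * (birthMeasure n).real (EK k p K' C') := by
  have hq0 : 0 ≤ 1 - p := by linarith
  have hq1 : 1 - p ≤ 1 := by linarith
  have hnn : 0 ≤ (birthMeasure n).real (EK k p K C) * (birthMeasure n).real (EK k p K' C') := by
    positivity
  by_cases ha : K' ∈ AK k K C
  · have : EK k p K C ∩ EK k p K' C' = ∅ := by
      ext t
      simp only [Set.mem_inter_iff, Set.mem_empty_iff_false, iff_false, not_and]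
      rintro ⟨_, h2⟩ ⟨h3, _⟩
      have := h2 K' ha
      have := h3 K' (by simp)
      linarith
    rw [this]; simpa using hnn
  by_cases hb : K ∈ AK k K' C'
  · have : EK k p K C ∩ EK k p K' C' = ∅ := by
      ext t
      simp only [Set.mem_inter_iff, Set.mem_empty_iff_false, iff_false, not_and]
      rintro ⟨h1, _⟩ ⟨_, h4⟩
      have := h4 K hb
      have := h1 K (by simp)
      linarith
    rw [this]; simpa using hnn
  have hd : Disjoint (petals K C) (petals K' C') := by
    rw [Finset.disjoint_left]
    intro P hP hP'
    apply ha
    rw [AK, Finset.mem_filter, mem_allK]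
    refine ⟨hK', hne.symm, P, hP, ?_⟩
    rw [mem_petals] at hP'
    obtain ⟨w, hw, rfl⟩ := hP'
    exact Finset.insert_subset (Finset.mem_sdiff.1 hw).1 hCK'
  have hset : EK k p K C ∩ EK k p K' C' = {t | (∀ K'' ∈ ({K, K'} : Finset (Finset (Fin n))),
      t K'' ≤ p) ∧ ∀ K'' ∈ AK k K C ∪ AK k K' C', p < t K''} := by
    ext t
    simp only [EK, Set.mem_inter_iff]
    constructor
    · rintro ⟨⟨h1, h2⟩, ⟨h3, h4⟩⟩
      refine ⟨fun L hL => ?_, fun L hL => ?_⟩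
      · rcases Finset.mem_insert.1 hL with rfl | h
        · exact h1 _ (by simp)
        · exact h3 _ h
      · rcases Finset.mem_union.1 hL with h | h
        · exact h2 _ h
        · exact h4 _ h
    · rintro ⟨h1, h2⟩
      refine ⟨⟨fun L hL => h1 L ?_, fun L hL => h2 L ?_⟩, ⟨fun L hL => h1 L ?_, fun L hL => h2 L ?_⟩⟩
      · rw [Finset.mem_singleton] at hL; simp [hL]
      · exact Finset.mem_union_left _ hL
      · rw [Finset.mem_singleton] at hL; simp [hL]
      · exact Finset.mem_union_right _ hL
  have hdj : Disjoint ({K, K'} : Finset (Finset (Fin n))) (AK k K C ∪ AK k K' C') := by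
    rw [Finset.disjoint_left]
    intro L hL hL'
    rcases Finset.mem_insert.1 hL with rfl | h
    · rcases Finset.mem_union.1 hL' with h | h
      · exact notMem_AK h
      · exact hb h
    · rw [Finset.mem_singleton] at h
      subst h
      rcases Finset.mem_union.1 hL' with h | h
      · exact ha h
      · exact notMem_AK h
  rw [hset, bm_cyl _ _ hdj h0 h1, EK_real h0 h1, EK_real h0 h1, Finset.card_pair hne]
  have hi := card_AK_inter_le hjk hK hC hCK hK' hC' hCK' hd
  have hu := Finset.card_union_add_card_inter (AK k K C) (AK k K' C')
  calc p ^ 2 * (1 - p) ^ (AK k K C ∪ AK k K' C').card * (1 - p) ^ ((k - j + 1) ^ 2 * cb n k (j + 2))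
      ≤ p ^ 2 * (1 - p) ^ (AK k K C ∪ AK k K' C').card * (1 - p) ^ (AK k K C ∩ AK k K' C').card := by
        apply mul_le_mul_of_nonneg_left _ (by positivity)
        exact pow_le_pow_of_le_one hq0 hq1 hi
    _ = p ^ 2 * (1 - p) ^ ((AK k K C).card + (AK k K' C').card) := by rw [mul_assoc, ← pow_add, hu]
    _ = _ := by rw [pow_add]; ring

lemma no_EK {k j : ℕ} (hjk : j < k) (hn : k + 1 ≤ n) {p : ℝ} (h0 : 0 < p) (h1 : p < 1)
    (C : Finset (Fin n) → Finset (Fin n))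
    (hC : ∀ K ∈ allK n k, C K ⊆ K ∧ (C K).card = j) :
    (birthMeasure n).real {t | ∀ K ∈ allK n k, t ∉ EK k p K (C K)} ≤
      1 / (n.choose (k + 1) * (p * (1 - p) ^ ((k - j + 1) * cb n k (j + 1)))) +
      (1 / (1 - p) ^ ((k - j + 1) ^ 2 * cb n k (j + 2)) - 1) := by
  set μ := birthMeasure n
  have hq : 0 < 1 - p := by linarith
  set q0 := (1 - p) ^ ((k - j + 1) ^ 2 * cb n k (j + 2)) with hq0
  have hq0p : 0 < q0 := by positivity
  set m0 := (n.choose (k + 1) : ℝ) * (p * (1 - p) ^ ((k - j + 1) * cb n k (j + 1))) with hm0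
  have hm0p : 0 < m0 := by
    have : 0 < n.choose (k + 1) := Nat.choose_pos hn
    have : (0 : ℝ) < n.choose (k + 1) := by exact_mod_cast this
    positivity
  set m := ∑ K ∈ allK n k, μ.real (EK k p K (C K)) with hm
  have hm0m : m0 ≤ m := by
    have : m0 = ∑ K ∈ allK n k, (p * (1 - p) ^ ((k - j + 1) * cb n k (j + 1))) := by
      rw [Finset.sum_const, nsmul_eq_mul]
      simp [hm0, allK]
    rw [this, hm]
    apply Finset.sum_le_sum
    intro K hK
    rw [EK_real h0.le h1.le]
    apply mul_le_mul_of_nonneg_left _ h0.le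
    exact pow_le_pow_of_le_one hq.le (by linarith)
      (card_AK_le hjk (mem_allK.1 hK) (hC K hK).2 (hC K hK).1)
  have hmp : 0 < m := hm0p.trans_le hm0m
  have h2 : ∑ K ∈ allK n k, ∑ K' ∈ allK n k, μ.real (EK k p K (C K) ∩ EK k p K' (C K'))
      ≤ m + (1 / q0) * m ^ 2 := by
    have : m + (1 / q0) * m ^ 2 = ∑ K ∈ allK n k, ∑ K' ∈ allK n k,
        ((if K = K' then μ.real (EK k p K (C K)) else 0) +
          (1 / q0) * (μ.real (EK k p K (C K)) * μ.real (EK k p K' (C K')))) := by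
      simp only [Finset.sum_add_distrib, Finset.sum_ite_eq, ← Finset.mul_sum]
      rw [← Finset.sum_mul, ← hm, Finset.sum_ite_mem, Finset.inter_self, sq]
    rw [this]
    apply Finset.sum_le_sum
    intro K hK
    apply Finset.sum_le_sum
    intro K' hK'
    by_cases he : K = K'
    · subst he
      rw [if_pos rfl, Set.inter_self]
      have : 0 ≤ (1 / q0) * (μ.real (EK k p K (C K)) * μ.real (EK k p K (C K))) := by positivity
      linarith
    · rw [if_neg he, zero_add, one_div, inv_mul_eq_div, le_div_iff₀ hq0p]
      exact EK_inter hjk h0.le h1.le (mem_allK.1 hK) (hC K hK).2 (hC K hK).1 (mem_allK.1 hK')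
        (hC K' hK').2 (hC K' hK').1 he
  have := second_moment μ (allK n k) (fun K => EK k p K (C K))
    (fun K _ => meas_cyl _ _ _) m (1 / q0) hm hmp h2
  refine this.trans ?_
  gcongr

lemma no_cov {k j : ℕ} (hjk : j < k) {p : ℝ} (h0 : 0 ≤ p) (h1 : p ≤ 1)
    {K C : Finset (Fin n)} {w a x : Fin n} (hK : K.card = k + 1)
    (hC : C.card = j) (hCK : C ⊆ K) (hw : w ∈ K \ C) (ha : a ∉ K) (hx : x ∈ insert w C) :
    (birthMeasure n).real {t | t ∈ EK k p K C ∧ ¬ ∃ K' ∈ born k t p,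
        (insert a (insert w C)).erase x ⊆ K'} ≤
      p * (1 - p) ^ ((k - j + 2) * cb n k (j + 1) - (k - j + 2) ^ 2 * cb n k (j + 2) - 1) := by
  have hw' := Finset.mem_sdiff.1 hw
  have hPK : insert w C ⊆ K := Finset.insert_subset hw'.1 hCK
  have haP : a ∉ insert w C := fun h => ha (hPK h)
  set τ := (insert a (insert w C)).erase x with hτ
  have hax : a ≠ x := fun h => haP (h ▸ hx)
  have haτ : a ∈ τ := Finset.mem_erase.2 ⟨hax, Finset.mem_insert_self _ _⟩
  have hτc : τ.card = j + 1 := by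
    rw [hτ, Finset.card_erase_of_mem (Finset.mem_insert_of_mem hx),
      Finset.card_insert_of_notMem haP, Finset.card_insert_of_notMem hw'.2, hC]
    omega
  have hτp : τ ∉ petals K C := by
    intro h
    rw [mem_petals] at h
    obtain ⟨v, hv, he⟩ := h
    apply ha
    have : τ ⊆ K := by rw [he]; exact Finset.insert_subset (Finset.mem_sdiff.1 hv).1 hCK
    exact this haτ
  set S := insert τ (petals K C) with hS
  have hSc : S.card = k - j + 2 := by
    rw [hS, Finset.card_insert_of_notMem hτp, card_petals hK hC hCK hjk]
  have hSj : ∀ σ ∈ S, σ.card = j + 1 := by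
    intro σ hσ
    rcases Finset.mem_insert.1 hσ with rfl | h
    · exact hτc
    · exact card_of_mem_petals hC h
  have h1k := oneK_card hjk S hSj
  rw [hSc] at h1k
  set B := (oneK k S).erase K with hB
  have hBc : (k - j + 2) * cb n k (j + 1) - (k - j + 2) ^ 2 * cb n k (j + 2) - 1 ≤ B.card := by
    have := Finset.pred_card_le_card_erase (s := oneK k S) (a := K)
    rw [hB]; omega
  have hsub : {t | t ∈ EK k p K C ∧ ¬ ∃ K' ∈ born k t p, τ ⊆ K'} ⊆
      {t | (∀ K' ∈ ({K} : Finset (Finset (Fin n))), t K' ≤ p) ∧ ∀ K' ∈ B, p < t K'} := by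
    rintro t ⟨⟨h2, h3⟩, h4⟩
    refine ⟨h2, fun K' hK' => ?_⟩
    rw [hB, Finset.mem_erase, oneK, Finset.mem_filter, Finset.card_eq_one] at hK'
    obtain ⟨hne, hK'a, σ, hσ⟩ := hK'
    have hσ' : σ ∈ S.filter (fun σ => σ ⊆ K') := by rw [hσ]; simp
    rw [Finset.mem_filter] at hσ'
    rcases Finset.mem_insert.1 hσ'.1 with rfl | h
    · by_contra hlt
      exact h4 ⟨K', mem_born.2 ⟨mem_allK.1 hK'a, not_lt.1 hlt⟩, hσ'.2⟩
    · apply h3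
      rw [AK, Finset.mem_filter]
      exact ⟨hK'a, hne, σ, h, hσ'.2⟩
  refine (measureReal_mono hsub (measure_ne_top _ _)).trans ?_
  rw [bm_cyl _ _ (by simp [hB]) h0 h1]
  simp only [Finset.card_singleton, pow_one]
  apply mul_le_mul_of_nonneg_left _ h0
  exact pow_le_pow_of_le_one (by linarith) (by linarith) hBc

lemma mj_exists {k j : ℕ} (hj : 1 ≤ j) (hjk : j < k) (hn : k + 2 ≤ n) {p : ℝ} (h0 : 0 < p)
    (h1 : p < 1) :
    (birthMeasure n).real {t | ¬ ∃ K C J, IsMj (complexAt k n t p) k j K C J} ≤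
      1 / (n.choose (k + 1) * (p * (1 - p) ^ ((k - j + 1) * cb n k (j + 1)))) +
      (1 / (1 - p) ^ ((k - j + 1) ^ 2 * cb n k (j + 2)) - 1) +
      n.choose (k + 1) * ((j + 1) * (p * (1 - p) ^
        ((k - j + 2) * cb n k (j + 1) - (k - j + 2) ^ 2 * cb n k (j + 2) - 1))) := by
  have hch : ∀ K : Finset (Fin n), ∃ (C : Finset (Fin n)) (w a : Fin n), K ∈ allK n k →
      C ⊆ K ∧ C.card = j ∧ w ∈ K \ C ∧ a ∉ K := by
    intro K
    by_cases hK : K ∈ allK n k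
    · have hKc := mem_allK.1 hK
      obtain ⟨C, hCK, hC⟩ := Finset.exists_subset_card_eq (s := K) (n := j) (by omega)
      have : 0 < (K \ C).card := by rw [Finset.card_sdiff_of_subset hCK]; omega
      obtain ⟨w, hw⟩ := Finset.card_pos.1 this
      have : 0 < Kᶜ.card := by rw [Finset.card_compl, Fintype.card_fin]; omega
      obtain ⟨a, ha⟩ := Finset.card_pos.1 this
      exact ⟨C, w, a, fun _ => ⟨hCK, hC, hw, Finset.mem_compl.1 ha⟩⟩
    · exact ⟨∅, ⟨0, by omega⟩, ⟨0, by omega⟩, fun h => absurd h hK⟩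
  choose C w a hch using hch
  set μ := birthMeasure n
  have hsub : {t | ¬ ∃ K C J, IsMj (complexAt k n t p) k j K C J} ⊆
      {t | ∀ K ∈ allK n k, t ∉ EK k p K (C K)} ∪
      ⋃ K ∈ allK n k, ⋃ x ∈ insert (w K) (C K), {t | t ∈ EK k p K (C K) ∧ ¬ ∃ K' ∈ born k t p,
        (insert (a K) (insert (w K) (C K))).erase x ⊆ K'} := by
    intro t ht
    by_cases h : ∀ K ∈ allK n k, t ∉ EK k p K (C K)
    · left; exact h
    right
    push Not at h
    obtain ⟨K, hK, hE⟩ := h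
    obtain ⟨h2, h3, h4, h5⟩ := hch K hK
    by_contra hcon
    simp only [Set.mem_iUnion, not_exists] at hcon
    apply ht
    refine ⟨K, C K, mj_of hj hjk (w := w K) (a := a K)
      (mem_born.2 ⟨mem_allK.1 hK, hE.1 K (by simp)⟩) h2 h3 h4 h5 hE.2 ?_⟩
    intro x hx
    by_contra hno
    exact hcon K hK x hx ⟨hE, not_exists.1 hno⟩
  refine (measureReal_mono hsub (measure_ne_top _ _)).trans ((measureReal_union_le _ _).trans ?_)
  refine add_le_add (no_EK hjk (by omega) h0 h1 C fun K hK => ⟨(hch K hK).1, (hch K hK).2.1⟩) ?_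
  refine (measureReal_biUnion_finset_le _ _).trans ?_
  have hcard : ((allK n k).card : ℝ) = n.choose (k + 1) := by simp [allK]
  rw [← hcard, ← nsmul_eq_mul]
  apply Finset.sum_le_card_nsmul
  intro K hK
  obtain ⟨h2, h3, h4, h5⟩ := hch K hK
  refine (measureReal_biUnion_finset_le _ _).trans ?_
  have hPc : ((insert (w K) (C K)).card : ℝ) = j + 1 := by
    rw [Finset.card_insert_of_notMem (Finset.mem_sdiff.1 h4).2, h3]; push_cast; rfl
  rw [← hPc, ← nsmul_eq_mul]
  apply Finset.sum_le_card_nsmul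
  intro x hx
  exact no_cov hjk h0.le h1.le (mem_allK.1 hK) h3 h2 h4 h5 hx

end Bounds

/-! ### Numerical estimates -/

section Numeric

variable {n : ℕ}

lemma pow_le_exp {p : ℝ} (h1 : p ≤ 1) (M : ℕ) : (1 - p) ^ M ≤ Real.exp (-(p * M)) := by
  have h := Real.one_sub_le_exp_neg p
  calc (1 - p) ^ M ≤ (Real.exp (-p)) ^ M := pow_le_pow_left₀ (by linarith) h M
    _ = Real.exp (-(p * M)) := by rw [← Real.exp_nat_mul]; ring_nf

lemma exp_le_pow {p : ℝ} (h1 : p < 1) (M : ℕ) :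
    Real.exp (-(M * (p / (1 - p)))) ≤ (1 - p) ^ M := by
  have hq : 0 < 1 - p := by linarith
  have h : Real.exp (-(p / (1 - p))) ≤ 1 - p := by
    rw [Real.exp_neg]
    apply inv_le_of_inv_le₀ hq
    have := Real.add_one_le_exp (p / (1 - p))
    refine le_trans (le_of_eq ?_) this
    field_simp
    ring
  calc Real.exp (-(M * (p / (1 - p)))) = (Real.exp (-(p / (1 - p)))) ^ M := by
        rw [← Real.exp_nat_mul]; ring_nf
    _ ≤ (1 - p) ^ M := pow_le_pow_left₀ (Real.exp_pos _).le h M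

lemma cb_pos {k c : ℕ} (hn : k + 1 ≤ n) : 0 < cb n k c := by
  unfold cb
  exact Nat.choose_pos (by omega)

lemma cb_rel_real {k j : ℕ} (hjk : j < k) (hn : k + 1 ≤ n) :
    ((n : ℝ) - (j + 1)) * cb n k (j + 2) = ((k - j : ℕ) : ℝ) * cb n k (j + 1) := by
  have h := cb_rel (n := n) hjk
  have h2 : (((n - (j + 1)) * cb n k (j + 2) : ℕ) : ℝ) = (((k - j) * cb n k (j + 1) : ℕ) : ℝ) := by
    rw [h]
  rw [Nat.cast_mul, Nat.cast_mul, Nat.cast_sub (by omega)] at h2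
  push_cast at h2 ⊢
  exact h2

lemma pd_eq {k j : ℕ} (hjk : j < k) (hn : k + 1 ≤ n) (g : ℝ) :
    (g * Real.log n / cb n k (j + 1)) * cb n k (j + 2)
      = g * ((k - j : ℕ) : ℝ) * (Real.log n / ((n : ℝ) - (j + 1))) := by
  have h := cb_rel_real hjk hn
  have hb : (0 : ℝ) < cb n k (j + 1) := by exact_mod_cast cb_pos hn
  have hn' : (0 : ℝ) < (n : ℝ) - (j + 1) := by
    have : ((j + 1 : ℕ) : ℝ) < n := by exact_mod_cast (by omega : j + 1 < n)
    push_cast at this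
    linarith
  field_simp
  linear_combination g * Real.log n * h

lemma choose_rel {k j : ℕ} (hjk : j < k) (hn : k + 1 ≤ n) :
    (n.choose (k + 1) : ℝ) * (k + 1).choose (j + 1) = n.choose (j + 1) * cb n k (j + 1) := by
  have := Nat.choose_mul (n := n) (k := k + 1) (s := j + 1) (by omega)
  unfold cb
  exact_mod_cast this

lemma choose_p {k j : ℕ} (hjk : j < k) (hn : k + 1 ≤ n) (g : ℝ) :
    (n.choose (k + 1) : ℝ) * (g * Real.log n / cb n k (j + 1))
      = n.choose (j + 1) * (g * Real.log n) / (k + 1).choose (j + 1) := by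
  have h := choose_rel hjk hn
  have hb : (0 : ℝ) < cb n k (j + 1) := by exact_mod_cast cb_pos hn
  have hc : (0 : ℝ) < (k + 1).choose (j + 1) := by exact_mod_cast Nat.choose_pos (by omega)
  field_simp
  linear_combination g * Real.log n * h

lemma N_le (hn : 1 ≤ n) (r : ℕ) : (n.choose r : ℝ) ≤ Real.exp (r * Real.log n) := by
  have hn' : (0 : ℝ) < n := by exact_mod_cast hn
  rw [Real.exp_nat_mul, Real.exp_log hn']
  exact_mod_cast Nat.choose_le_pow n r

lemma N_ge {r : ℕ} (hn : 1 ≤ n) (hr : 2 * r ≤ n) :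
    Real.exp (r * Real.log n) ≤ (2 ^ r * r.factorial : ℝ) * n.choose r := by
  have hn' : (0 : ℝ) < n := by exact_mod_cast hn
  rw [Real.exp_nat_mul, Real.exp_log hn']
  have h := Nat.pow_sub_le_descFactorial n r
  rw [Nat.descFactorial_eq_factorial_mul_choose] at h
  have h2 : n ^ r ≤ (2 * (n + 1 - r)) ^ r := Nat.pow_le_pow_left (by omega) r
  have h3 : n ^ r ≤ (2 ^ r * r.factorial) * n.choose r := by
    calc n ^ r ≤ 2 ^ r * (n + 1 - r) ^ r := by rw [← mul_pow]; exact h2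
      _ ≤ 2 ^ r * (r.factorial * n.choose r) := by gcongr
      _ = _ := by ring
  exact_mod_cast h3

lemma est_m0 {k j : ℕ} (hjk : j < k) (hn : k + 1 ≤ n) (hn2 : 2 * (j + 1) ≤ n) {g p : ℝ}
    (hg : 0 < g) (hp : p = g * Real.log n / cb n k (j + 1)) (hp1 : p < 1)
    (hgp : ((k - j : ℕ) + 1 : ℝ) * g ≤ (j + 1) * (1 - p)) :
    g / ((k + 1).choose (j + 1) * (2 ^ (j + 1) * (j + 1).factorial)) * Real.log n ≤
      n.choose (k + 1) * (p * (1 - p) ^ ((k - j + 1) * cb n k (j + 1))) := by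
  have hb : (0 : ℝ) < cb n k (j + 1) := by exact_mod_cast cb_pos hn
  have hc : (0 : ℝ) < (k + 1).choose (j + 1) := by exact_mod_cast Nat.choose_pos (by omega)
  have hf : (0 : ℝ) < (j + 1).factorial := by exact_mod_cast Nat.factorial_pos _
  have hl : 0 ≤ Real.log n := Real.log_natCast_nonneg n
  have hq : 0 < 1 - p := by linarith
  rw [← mul_assoc (n.choose (k + 1) : ℝ)]
  have h1 : (n.choose (k + 1) : ℝ) * p = n.choose (j + 1) * (g * Real.log n) / (k + 1).choose (j + 1) := by
    rw [hp]; exact choose_p hjk hn g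
  rw [h1]
  have h2 : Real.exp (-((j + 1 : ℕ) * Real.log n)) ≤ (1 - p) ^ ((k - j + 1) * cb n k (j + 1)) := by
    refine le_trans ?_ (exp_le_pow hp1 _)
    apply Real.exp_le_exp.2
    apply neg_le_neg
    have hpb : p * cb n k (j + 1) = g * Real.log n := by rw [hp]; field_simp
    push_cast
    have : ((k - j : ℕ) + 1 : ℝ) * cb n k (j + 1) * (p / (1 - p)) =
        ((((k - j : ℕ) + 1 : ℝ) * g) / (1 - p)) * Real.log n := by
      field_simp
      linear_combination hpb
    rw [this]
    apply mul_le_mul_of_nonneg_right _ hl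
    rw [div_le_iff₀ hq]
    exact hgp
  have h3 := N_ge (n := n) (r := j + 1) (by omega) hn2
  have hX : 0 ≤ (n.choose (j + 1) : ℝ) * (g * Real.log n) / (k + 1).choose (j + 1) := by positivity
  refine le_trans ?_ (mul_le_mul_of_nonneg_left h2 hX)
  rw [Real.exp_neg]
  set E := Real.exp ((j + 1 : ℕ) * Real.log n) with hE
  have hEp : 0 < E := Real.exp_pos _
  rw [div_mul_eq_mul_div, ← div_eq_mul_inv, div_div, div_le_div_iff₀ (by positivity) (by positivity)]
  calc g * Real.log n * (((k + 1).choose (j + 1) : ℝ) * E) = (g * Real.log n * ((k + 1).choose (j + 1) : ℝ)) * E := by ring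
    _ ≤ (g * Real.log n * ((k + 1).choose (j + 1) : ℝ)) * ((2 ^ (j + 1) * (j + 1).factorial : ℝ) * n.choose (j + 1)) := by
        gcongr
    _ = _ := by ring

lemma est_cov {k j : ℕ} (hjk : j < k) (hn : k + 1 ≤ n) {g p : ℝ}
    (hg : 0 < g) (hp : p = g * Real.log n / cb n k (j + 1)) (hp1 : p < 1)
    (hpd : ((k - j : ℕ) + 2 : ℝ) ^ 2 * (p * cb n k (j + 2)) ≤ 1) :
    n.choose (k + 1) * ((j + 1) * (p * (1 - p) ^
        ((k - j + 2) * cb n k (j + 1) - (k - j + 2) ^ 2 * cb n k (j + 2) - 1))) ≤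
      ((j + 1) * g * Real.exp 2) * (Real.log n *
        Real.exp (-((((k - j : ℕ) + 2 : ℝ) * g - (j + 1)) * Real.log n))) := by
  have hb : (0 : ℝ) < cb n k (j + 1) := by exact_mod_cast cb_pos hn
  have hc : (1 : ℝ) ≤ (k + 1).choose (j + 1) := by exact_mod_cast Nat.choose_pos (by omega)
  have hl : 0 ≤ Real.log n := Real.log_natCast_nonneg n
  have hp0 : 0 ≤ p := by rw [hp]; positivity
  have hpb : p * cb n k (j + 1) = g * Real.log n := by rw [hp]; field_simp
  set M := (k - j + 2) * cb n k (j + 1) - (k - j + 2) ^ 2 * cb n k (j + 2) - 1 with hM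
  have hMr : ((k - j : ℕ) + 2 : ℝ) * cb n k (j + 1) ≤
      M + ((k - j : ℕ) + 2 : ℝ) ^ 2 * cb n k (j + 2) + 1 := by
    have : (k - j + 2) * cb n k (j + 1) ≤ M + (k - j + 2) ^ 2 * cb n k (j + 2) + 1 := by omega
    exact_mod_cast this
  have h2 : (1 - p) ^ M ≤ Real.exp (2 - ((k - j : ℕ) + 2 : ℝ) * g * Real.log n) := by
    refine (pow_le_exp hp1.le M).trans (Real.exp_le_exp.2 ?_)
    have := mul_le_mul_of_nonneg_left hMr hp0
    nlinarith
  have h1 : (n.choose (k + 1) : ℝ) * p ≤ Real.exp ((j + 1) * Real.log n) * (g * Real.log n) := by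
    rw [hp, choose_p hjk hn g]
    apply div_le_of_le_mul₀ (by positivity) (by positivity)
    have := N_le (n := n) (by omega) (j + 1)
    push_cast at this
    calc (n.choose (j + 1) : ℝ) * (g * Real.log n) ≤ Real.exp ((j + 1) * Real.log n) * (g * Real.log n) := by
          gcongr
      _ ≤ _ := le_mul_of_one_le_right (by positivity) hc
  calc n.choose (k + 1) * ((j + 1) * (p * (1 - p) ^ M))
      = (j + 1) * ((n.choose (k + 1) * p) * (1 - p) ^ M) := by ring
    _ ≤ (j + 1) * ((Real.exp ((j + 1) * Real.log n) * (g * Real.log n)) *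
        Real.exp (2 - ((k - j : ℕ) + 2 : ℝ) * g * Real.log n)) := by
        have : 0 ≤ (1 - p) ^ M := pow_nonneg (by linarith) _
        gcongr
    _ = ((j + 1) * g * Real.log n) * (Real.exp ((j + 1) * Real.log n) *
        Real.exp (2 - ((k - j : ℕ) + 2 : ℝ) * g * Real.log n)) := by ring
    _ = ((j + 1) * g * Real.log n) * (Real.exp 2 *
        Real.exp (-((((k - j : ℕ) + 2 : ℝ) * g - (j + 1)) * Real.log n))) := by
        rw [← Real.exp_add, ← Real.exp_add]; ring_nf
    _ = _ := by ring

lemma est_q0 {k j : ℕ} {p : ℝ} (hp0 : 0 ≤ p) (hp1 : p < 1)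
    (hu : ((k - j : ℕ) + 1 : ℝ) ^ 2 * (p * cb n k (j + 2)) < 1) :
    1 / (1 - p) ^ ((k - j + 1) ^ 2 * cb n k (j + 2)) ≤
      1 / (1 - ((k - j : ℕ) + 1 : ℝ) ^ 2 * (p * cb n k (j + 2))) := by
  apply one_div_le_one_div_of_le (by linarith)
  have := one_add_mul_le_pow (a := -p) (by linarith) ((k - j + 1) ^ 2 * cb n k (j + 2))
  push_cast at this
  calc _ = 1 + ((k - j : ℕ) + 1 : ℝ) ^ 2 * cb n k (j + 2) * -p := by ring
    _ ≤ _ := by rw [sub_eq_add_neg]; exact this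

lemma est_deg {k j Δ : ℕ} (hn : k + 1 ≤ n) {Γ A p : ℝ} (hΓ : 0 < Γ)
    (hp : p = Γ * Real.log n / cb n k (j + 1)) (hΔ : A * Real.log n ≤ Δ)
    (hA : A = Real.exp 1 * Γ + (j + 2)) :
    n.choose (j + 1) * (((cb n k (j + 1) : ℝ) * p) ^ (Δ + 1) / (Nat.factorial (Δ + 1)))
      ≤ Real.exp (-Real.log n) := by
  have hb : (0 : ℝ) < cb n k (j + 1) := by exact_mod_cast cb_pos hn
  have hl : 0 ≤ Real.log n := Real.log_natCast_nonneg n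
  have hpb : (cb n k (j + 1) : ℝ) * p = Γ * Real.log n := by rw [hp]; field_simp
  rw [hpb]
  have h1 := Real.pow_div_factorial_le_exp (Real.exp 1 * Γ * Real.log n) (by positivity) (Δ + 1)
  have h2 : (Γ * Real.log n) ^ (Δ + 1) / (Nat.factorial (Δ + 1)) ≤
      Real.exp (Real.exp 1 * Γ * Real.log n) * Real.exp (-(Δ + 1 : ℕ)) := by
    have e : (Γ * Real.log n) ^ (Δ + 1) = (Real.exp 1 * Γ * Real.log n) ^ (Δ + 1) *
        Real.exp (-(Δ + 1 : ℕ)) := by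
      rw [mul_assoc (Real.exp 1), mul_pow (Real.exp 1), ← Real.exp_nat_mul, mul_one]
      rw [mul_right_comm, ← Real.exp_add]; simp
    rw [e, mul_div_right_comm]
    gcongr
  calc _ ≤ Real.exp ((j + 1 : ℕ) * Real.log n) *
      (Real.exp (Real.exp 1 * Γ * Real.log n) * Real.exp (-(Δ + 1 : ℕ))) := by
        apply mul_le_mul (N_le (by omega) _) h2 (by positivity) (Real.exp_pos _).le
    _ ≤ _ := by
        rw [← Real.exp_add, ← Real.exp_add]
        apply Real.exp_le_exp.2
        push_cast
        rw [hA] at hΔ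
        nlinarith

lemma est_DD_large {k j : ℕ} (hjk : j < k) (hn : k + 1 ≤ n) {g p : ℝ}
    (hp : p = g * Real.log n / cb n k (j + 1)) (hp0 : 0 ≤ p) (hp1 : p ≤ 1)
    (S : Finset (Finset (Fin n)))
    (hS : ∀ σ ∈ S, σ.card = j + 1) (hmin : MinS j S) {κ : ℝ}
    (hκ : κ = ((j + 2) * (k + 1).choose (j + 2) : ℕ)) :
    (1 - p) ^ (DD k j S).card ≤ Real.exp (-(g * S.card / κ * Real.log n)) := by
  have hb : (0 : ℝ) < cb n k (j + 1) := by exact_mod_cast cb_pos hn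
  have hκp : 0 < κ := by
    rw [hκ]; exact_mod_cast Nat.mul_pos (by omega) (Nat.choose_pos (by omega))
  have hpb : p * cb n k (j + 1) = g * Real.log n := by rw [hp]; field_simp
  refine (pow_le_exp hp1 _).trans (Real.exp_le_exp.2 (neg_le_neg ?_))
  have h := DD_large hjk S hS hmin
  have h' : (S.card : ℝ) * cb n k (j + 1) ≤ κ * (DD k j S).card := by
    rw [hκ]; exact_mod_cast h
  have : g * S.card / κ * Real.log n = p * (S.card * cb n k (j + 1)) / κ := by
    rw [div_mul_eq_mul_div]
    congr 1
    linear_combination (-(S.card : ℝ)) * hpb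
  rw [this, div_le_iff₀ hκp]
  nlinarith [mul_le_mul_of_nonneg_left h' hp0]

lemma est_DD_small {k j : ℕ} (hjk : j < k) (hn : k + 1 ≤ n) {g p : ℝ}
    (hp : p = g * Real.log n / cb n k (j + 1)) (hp0 : 0 ≤ p) (hp1 : p ≤ 1)
    (S : Finset (Finset (Fin n)))
    (hS : ∀ σ ∈ S, σ.card = j + 1) {S0 : ℕ} (hSS : S.card ≤ S0)
    (hpd : (S0 : ℝ) ^ 2 * (p * cb n k (j + 2)) ≤ 1) :
    (1 - p) ^ (DD k j S).card ≤ Real.exp (1 - g * S.card * Real.log n) := by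
  have hb : (0 : ℝ) < cb n k (j + 1) := by exact_mod_cast cb_pos hn
  have hpb : p * cb n k (j + 1) = g * Real.log n := by rw [hp]; field_simp
  refine (pow_le_exp hp1 _).trans (Real.exp_le_exp.2 ?_)
  have h := DD_small hjk S hS
  have h' : (S.card : ℝ) * cb n k (j + 1) ≤ (DD k j S).card + (S.card : ℝ) ^ 2 * cb n k (j + 2) := by
    exact_mod_cast h
  have h3 : (S.card : ℝ) ^ 2 * (p * cb n k (j + 2)) ≤ 1 := by
    refine le_trans ?_ hpd
    have : (S.card : ℝ) ≤ S0 := by exact_mod_cast hSS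
    gcongr
  have h4 := mul_le_mul_of_nonneg_left h' hp0
  have h5 : g * S.card * Real.log n = p * (S.card * cb n k (j + 1)) := by
    linear_combination (-(S.card : ℝ)) * hpb
  rw [h5]
  nlinarith

lemma est_sum {k j Δ S0 : ℕ} (hjk : j < k) (hn : 1 ≤ n) {g ε κ : ℝ} (hκ : 0 < κ) (hε : 0 < ε)
    (hW : ((2 * Δ : ℕ) * (k + 1).choose (j + 1) : ℝ) ≤ Real.exp (ε * Real.log n))
    (hε1 : 2 * ε ≤ g / (2 * κ)) (hε2 : 2 * ε ≤ g)
    (hS0 : 2 * (j + 1) + 1 ≤ S0 * (g / (2 * κ))) :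
    ∑ s ∈ Finset.Icc (k - j + 2) (n.choose (j + 1)),
      2 * (if s ≤ S0 then Real.exp (1 - g * s * Real.log n)
        else Real.exp (-(g * s / κ * Real.log n))) *
      (n.choose (j + 1) * ((2 * Δ : ℕ) * (k + 1).choose (j + 1) : ℝ) ^ (2 * (s - 1)))
    ≤ 2 * Real.exp 1 * (S0 + 1) *
        Real.exp (-(((g - 2 * ε) * ((k - j : ℕ) + 2) - (j + 1)) * Real.log n)) +
      2 * Real.exp (-Real.log n) := by
  have hl : 0 ≤ Real.log n := Real.log_natCast_nonneg n
  set l := Real.log n with hldef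
  set T1 := 2 * Real.exp 1 * Real.exp (-(((g - 2 * ε) * ((k - j : ℕ) + 2) - (j + 1)) * l)) with hT1
  set T2 := 2 * Real.exp (-((j + 2) * l)) with hT2
  have hT1p : 0 ≤ T1 := by positivity
  have hT2p : 0 ≤ T2 := by positivity
  have hN := N_le hn (j + 1)
  have hterm : ∀ s ∈ Finset.Icc (k - j + 2) (n.choose (j + 1)),
      2 * (if s ≤ S0 then Real.exp (1 - g * s * l) else Real.exp (-(g * s / κ * l))) *
      (n.choose (j + 1) * ((2 * Δ : ℕ) * (k + 1).choose (j + 1) : ℝ) ^ (2 * (s - 1)))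
      ≤ (if s ≤ S0 then T1 else 0) + T2 := by
    intro s hs
    have hs := Finset.mem_Icc.1 hs
    have hs1 : ((k - j : ℕ) : ℝ) + 2 ≤ s := by exact_mod_cast hs.1
    have hWp : ((2 * Δ : ℕ) * (k + 1).choose (j + 1) : ℝ) ^ (2 * (s - 1)) ≤
        Real.exp (2 * ε * s * l) := by
      calc _ ≤ (Real.exp (ε * l)) ^ (2 * (s - 1)) := pow_le_pow_left₀ (by positivity) hW _
        _ = Real.exp ((2 * (s - 1) : ℕ) * (ε * l)) := by rw [← Real.exp_nat_mul]
        _ ≤ _ := by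
            apply Real.exp_le_exp.2
            have : ((2 * (s - 1) : ℕ) : ℝ) ≤ 2 * s := by
              exact_mod_cast (by omega : 2 * (s - 1) ≤ 2 * s)
            have h2 : 0 ≤ ε * l := by positivity
            nlinarith
    have hX : (n.choose (j + 1) * ((2 * Δ : ℕ) * (k + 1).choose (j + 1) : ℝ) ^ (2 * (s - 1))) ≤
        Real.exp ((j + 1 : ℕ) * l + 2 * ε * s * l) := by
      rw [Real.exp_add]
      apply mul_le_mul hN hWp (by positivity) (Real.exp_pos _).le
    by_cases h : s ≤ S0
    · rw [if_pos h, if_pos h]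
      refine le_trans ?_ (le_add_of_nonneg_right hT2p)
      calc _ ≤ 2 * Real.exp (1 - g * s * l) * Real.exp ((j + 1 : ℕ) * l + 2 * ε * s * l) := by gcongr
        _ ≤ T1 := by
          rw [hT1, mul_assoc 2 (Real.exp 1), mul_assoc 2 (Real.exp (1 - _)), ← Real.exp_add,
            ← Real.exp_add]
          apply mul_le_mul_of_nonneg_left _ (by norm_num)
          apply Real.exp_le_exp.2
          push_cast
          have : 0 ≤ (g - 2 * ε) * l * (s - ((k - j : ℕ) + 2)) := by
            apply mul_nonneg (mul_nonneg (by linarith) hl) (by linarith)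
          nlinarith
    · rw [if_neg h, if_neg h, zero_add]
      push Not at h
      have hs0 : (S0 : ℝ) ≤ s := by exact_mod_cast h.le
      calc _ ≤ 2 * Real.exp (-(g * s / κ * l)) * Real.exp ((j + 1 : ℕ) * l + 2 * ε * s * l) := by gcongr
        _ ≤ T2 := by
          rw [hT2, mul_assoc, ← Real.exp_add]
          apply mul_le_mul_of_nonneg_left _ (by norm_num)
          apply Real.exp_le_exp.2
          push_cast
          have hr : g * s / κ = 2 * (s * (g / (2 * κ))) := by field_simp
          rw [hr]
          have hgk : 0 ≤ g / (2 * κ) := by linarith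
          have h6 : (S0 : ℝ) * (g / (2 * κ)) ≤ s * (g / (2 * κ)) :=
            mul_le_mul_of_nonneg_right hs0 hgk
          have h7 : 2 * ε * s ≤ s * (g / (2 * κ)) := by
            have : (0 : ℝ) ≤ s := by positivity
            nlinarith
          have h8 : 0 ≤ l * (2 * (s * (g / (2 * κ))) - 2 * ε * s - (2 * (j + 1) + 1)) :=
            mul_nonneg hl (by linarith)
          nlinarith
  refine (Finset.sum_le_sum hterm).trans ?_
  rw [Finset.sum_add_distrib, ← Finset.sum_filter, Finset.sum_const, Finset.sum_const,
    nsmul_eq_mul, nsmul_eq_mul]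
  apply add_le_add
  · have hc : ((((Finset.Icc (k - j + 2) (n.choose (j + 1))).filter (fun s => s ≤ S0)).card : ℕ) : ℝ)
        ≤ S0 + 1 := by
      have : ((Finset.Icc (k - j + 2) (n.choose (j + 1))).filter (fun s => s ≤ S0)).card ≤ S0 + 1 := by
        rw [← Finset.card_range (S0 + 1)]
        apply Finset.card_le_card
        intro s hs
        have := (Finset.mem_filter.1 hs).2
        exact Finset.mem_range.2 (by omega)
      exact_mod_cast this
    calc _ ≤ (S0 + 1 : ℝ) * T1 := by gcongr
      _ = _ := by rw [hT1]; ring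
  · have hc : ((Finset.Icc (k - j + 2) (n.choose (j + 1))).card : ℝ) ≤ Real.exp ((j + 1 : ℕ) * l) := by
      refine le_trans ?_ hN
      rw [Nat.card_Icc]
      exact_mod_cast (by omega : n.choose (j + 1) + 1 - (k - j + 2) ≤ n.choose (j + 1))
    calc _ ≤ Real.exp ((j + 1 : ℕ) * l) * T2 := by gcongr
      _ = _ := by
        rw [hT2, mul_left_comm, ← Real.exp_add]
        push_cast
        ring_nf

lemma est_x {j : ℕ} (hn : 1 ≤ n) :
    (1 + Real.exp (-((j + 2) * Real.log n))) ^ (n.choose (j + 1)) - 1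
      ≤ Real.exp (Real.exp (-Real.log n)) - 1 := by
  have hN := N_le hn (j + 1)
  set x := Real.exp (-((j + 2) * Real.log n)) with hx
  have hxp : 0 < x := Real.exp_pos _
  have h1 : (1 + x) ^ (n.choose (j + 1)) ≤ Real.exp (n.choose (j + 1) * x) := by
    rw [Real.exp_nat_mul]
    apply pow_le_pow_left₀ (by positivity)
    linarith [Real.add_one_le_exp x]
  have h2 : (n.choose (j + 1) : ℝ) * x ≤ Real.exp (-Real.log n) := by
    calc _ ≤ Real.exp ((j + 1 : ℕ) * Real.log n) * x := by gcongr
      _ = _ := by rw [hx, ← Real.exp_add]; push_cast; ring_nf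
  have := Real.exp_le_exp.2 h2
  linarith

end Numeric

/-! ### Putting everything together -/

section Final

/-- The good event of the main theorem. -/
def Good (k j n : ℕ) : Set (Finset (Fin n) → ℝ) :=
  {t : Finset (Fin n) → ℝ |
      ∀ p : ℝ, pMj k j n t ≤ p →
        ∀ f : Cochain (complexAt k n t p) j,
          f ∈ cocycles (complexAt k n t p) j →
            GeneratedByMjMinus (complexAt k n t p) k j f}

lemma good_imp {n k j : ℕ} (hj : 1 ≤ j) (hjk : j < k) {p p' : ℝ} (h0 : 0 ≤ p) (h1 : p ≤ 1)
    {t : Finset (Fin n) → ℝ}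
    (hM : ∃ K C J, IsMj (complexAt k n t p) k j K C J)
    (hB1 : ¬ ∃ S : Finset (Finset (Fin n)), (∀ σ ∈ S, σ.card = j + 1) ∧
      MinS j S ∧ (∀ K ∈ DD k j S, p < t K) ∧ Conn (born k t p' \ DD k j S) S ∧
      k - j + 2 ≤ S.card)
    (hB2 : ¬ ∃ S : Finset (Finset (Fin n)), (∀ σ ∈ S, σ.card = j + 1) ∧
      MinS j S ∧ (∀ K ∈ DD k j S, p' < t K) ∧ S.Nonempty) : t ∈ Good k j n := by
  intro q hq f hf
  have hpq : p ≤ q := by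
    have hmem : p ∈ {p : ℝ | p ∈ Set.Icc (0 : ℝ) 1 ∧ ∃ K C J, IsMj (complexAt k n t p) k j K C J} :=
      ⟨⟨h0, h1⟩, hM⟩
    have hbdd : BddAbove {p : ℝ | p ∈ Set.Icc (0 : ℝ) 1 ∧
        ∃ K C J, IsMj (complexAt k n t p) k j K C J} := ⟨1, fun r hr => hr.1.2⟩
    exact (le_csSup hbdd hmem).trans hq
  by_contra hng
  rcases le_or_gt q p' with h | h
  · obtain ⟨S, hS, hmin, hun, hconn, hc⟩ := bad_support hj hjk f hf hng
    refine hB1 ⟨S, hS, hmin, fun K hK => hpq.trans_lt (hun K hK), hconn.mono ?_, hc⟩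
    intro K hK
    rw [mem_born] at hK
    refine Finset.mem_sdiff.2 ⟨mem_born.2 ⟨hK.1, hK.2.trans h⟩, fun hD => ?_⟩
    exact absurd (hun K hD) (not_lt.2 hK.2)
  · obtain ⟨S, hS, hmin, hun, hne⟩ := bad_support' hj f hf hng
    exact hB2 ⟨S, hS, hmin, fun K hK => h.trans (hun K hK), hne⟩

lemma final_bound {n k j S0 Δ : ℕ} (hj : 1 ≤ j) (hjk : j < k) (hn : k + 2 ≤ n)
    (hn2 : 2 * (j + 1) ≤ n) {g Γ ε κ A η c' : ℝ} (hg : 0 < g) (hε : 0 < ε)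
    (hκ : κ = ((j + 2) * (k + 1).choose (j + 2) : ℕ)) (hΓ : Γ = κ * (j + 2))
    (hA : A = Real.exp 1 * Γ + (j + 2)) (hη : η = Real.log n / ((n : ℝ) - (j + 1)))
    (hc' : c' = g / ((k + 1).choose (j + 1) * (2 ^ (j + 1) * (j + 1).factorial)))
    (hε1 : 2 * ε ≤ g / (2 * κ)) (hε2 : 2 * ε ≤ g)
    (hS0 : 2 * (j + 1) + 1 ≤ S0 * (g / (2 * κ)))
    (hΔ : A * Real.log n ≤ Δ)
    (hW : ((2 * Δ : ℕ) * (k + 1).choose (j + 1) : ℝ) ≤ Real.exp (ε * Real.log n))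
    (hl : 1 ≤ Real.log n)
    (hη1 : g * ((k - j : ℕ) : ℝ) * η < 1)
    (hη2 : ((k - j : ℕ) + 1 : ℝ) * g ≤ (j + 1) * (1 - g * ((k - j : ℕ) : ℝ) * η))
    (hη3 : ((k - j : ℕ) + 2 : ℝ) ^ 2 * (g * ((k - j : ℕ) : ℝ) * η) < 1)
    (hη4 : (S0 : ℝ) ^ 2 * (g * ((k - j : ℕ) : ℝ) * η) ≤ 1)
    (hη5 : Γ * ((k - j : ℕ) : ℝ) * η ≤ 1) :
    1 ≤ (birthMeasure n).real (Good k j n) +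
      ((1 / (c' * Real.log n) + (1 / (1 - ((k - j : ℕ) + 1 : ℝ) ^ 2 * (g * ((k - j : ℕ) : ℝ) * η)) - 1)
        + ((j + 1) * g * Real.exp 2) * (Real.log n *
        Real.exp (-((((k - j : ℕ) + 2 : ℝ) * g - (j + 1)) * Real.log n))))
      + (Real.exp (-Real.log n) + (2 * Real.exp 1 * (S0 + 1) *
        Real.exp (-(((g - 2 * ε) * ((k - j : ℕ) + 2) - (j + 1)) * Real.log n)) +
      2 * Real.exp (-Real.log n)))
      + (Real.exp (Real.exp (-Real.log n)) - 1)) := by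
  set μ := birthMeasure n
  have hb : (0 : ℝ) < cb n k (j + 1) := by exact_mod_cast cb_pos (by omega)
  have hd : (1 : ℝ) ≤ cb n k (j + 2) := by exact_mod_cast cb_pos (by omega)
  have hκp : 0 < κ := by
    rw [hκ]; exact_mod_cast Nat.mul_pos (by omega) (Nat.choose_pos (by omega))
  have hΓp : 0 < Γ := by rw [hΓ]; positivity
  have hcp : 0 < c' := by
    have : (0 : ℝ) < (k + 1).choose (j + 1) := by exact_mod_cast Nat.choose_pos (by omega)
    rw [hc']; positivity
  set p := g * Real.log n / cb n k (j + 1) with hp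
  set p' := Γ * Real.log n / cb n k (j + 1) with hp'
  have hpd : p * cb n k (j + 2) = g * ((k - j : ℕ) : ℝ) * η := by
    rw [hη]; exact pd_eq hjk (by omega) g
  have hpd' : p' * cb n k (j + 2) = Γ * ((k - j : ℕ) : ℝ) * η := by
    rw [hη]; exact pd_eq hjk (by omega) Γ
  have hp0 : 0 < p := by positivity
  have hp0' : 0 < p' := by positivity
  have hple : p ≤ p * cb n k (j + 2) := le_mul_of_one_le_right hp0.le hd
  have hple' : p' ≤ p' * cb n k (j + 2) := le_mul_of_one_le_right hp0'.le hd
  have hp1 : p < 1 := by linarith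
  have hp1' : p' ≤ 1 := by linarith
  -- first event
  have b1 := mj_exists (n := n) hj hjk hn hp0 hp1
  have c1 := est_m0 hjk (by omega) hn2 hg hp hp1 (by
    refine hη2.trans ?_
    have : (0 : ℝ) ≤ (j : ℝ) + 1 := by positivity
    apply mul_le_mul_of_nonneg_left _ this
    linarith)
  rw [← hc'] at c1
  have c1' := one_div_le_one_div_of_le (by positivity) c1
  have hmono : ((k - j : ℕ) + 1 : ℝ) ^ 2 * (p * cb n k (j + 2)) ≤
      ((k - j : ℕ) + 2 : ℝ) ^ 2 * (p * cb n k (j + 2)) := by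
    gcongr; norm_num
  have c2 := est_q0 (n := n) (k := k) (j := j) hp0.le hp1 (by
    rw [← hpd] at hη3; exact hmono.trans_lt hη3)
  rw [hpd] at c2
  have c3 := est_cov hjk (by omega) hg hp hp1 (by rw [hpd]; exact hη3.le)
  -- second event
  have d1 := deg_tail (n := n) (k := k) (j := j) (Δ := Δ) hjk hp0'.le hp1'
  have d2 := est_deg (n := n) (k := k) (j := j) (by omega) hΓp hp' hΔ hA
  have d3 := d1.trans d2
  have hexp : Real.exp (-Real.log n) ≤ 1 / 2 := by
    have : Real.exp (-Real.log n) ≤ Real.exp (-1) := Real.exp_le_exp.2 (by linarith)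
    refine this.trans ?_
    rw [Real.exp_neg, inv_eq_one_div]
    apply one_div_le_one_div_of_le (by norm_num)
    have := Real.add_one_le_exp 1
    linarith
  have hdeg : 1 / 2 ≤ μ.real {t | Deg j (born k t p') Δ} := by
    have h2 : μ.real {t | ¬ Deg j (born k t p') Δ} = 1 - μ.real {t | Deg j (born k t p') Δ} :=
      probReal_compl_eq_one_sub (meas_born k p' (fun B => Deg j B Δ))
    rw [h2] at d3
    linarith
  have b2 := bad1_le (n := n) (k := k) (j := j) (Δ := Δ) (p := p) (p' := p') hp0.le hp1.le
    (fun s => if s ≤ S0 then Real.exp (1 - g * s * Real.log n)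
        else Real.exp (-(g * s / κ * Real.log n))) hdeg (by
      intro S hS hmin _
      by_cases h : S.card ≤ S0
      · simp only [h, if_true]
        exact est_DD_small hjk (by omega) hp hp0.le hp1.le S hS h (by rw [hpd]; exact hη4)
      · simp only [h, if_false]
        exact est_DD_large hjk (by omega) hp hp0.le hp1.le S hS hmin hκ) (by
      intro s
      split_ifs <;> positivity)
  have e2 := est_sum (n := n) (k := k) (j := j) (Δ := Δ) (S0 := S0) hjk (by omega) hκp hε hW hε1 hε2 hS0
  -- third event
  have b3 := bad2_le (n := n) (k := k) (j := j) (p := p') (x := Real.exp (-((j + 2) * Real.log n)))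
    hp0'.le hp1' (Real.exp_pos _).le (by
      intro S hS hmin
      refine (est_DD_large hjk (by omega) hp' hp0'.le hp1' S hS hmin hκ).trans (le_of_eq ?_)
      rw [← Real.exp_nat_mul]
      congr 1
      rw [hΓ]
      field_simp)
  have e3 := est_x (n := n) (j := j) (by omega)
  -- union bound
  have hcover : (Set.univ : Set (Finset (Fin n) → ℝ)) ⊆ Good k j n ∪
      ({t | ¬ ∃ K C J, IsMj (complexAt k n t p) k j K C J} ∪
      {t | ∃ S : Finset (Finset (Fin n)), (∀ σ ∈ S, σ.card = j + 1) ∧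
      MinS j S ∧ (∀ K ∈ DD k j S, p < t K) ∧ Conn (born k t p' \ DD k j S) S ∧
      k - j + 2 ≤ S.card} ∪
      {t | ∃ S : Finset (Finset (Fin n)), (∀ σ ∈ S, σ.card = j + 1) ∧
      MinS j S ∧ (∀ K ∈ DD k j S, p' < t K) ∧ S.Nonempty}) := by
    intro t _
    by_contra hcon
    simp only [Set.mem_union, not_or] at hcon
    obtain ⟨hG, ⟨hM, h1⟩, h2⟩ := hcon
    exact hG (good_imp hj hjk hp0.le hp1.le (not_not.1 hM) h1 h2)
  have htot := (measureReal_mono (μ := μ) hcover (measure_ne_top _ _)).trans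
    (measureReal_union_le _ _)
  rw [probReal_univ] at htot
  have hu1 := measureReal_union_le (μ := μ)
    ({t | ¬ ∃ K C J, IsMj (complexAt k n t p) k j K C J} ∪
      {t | ∃ S : Finset (Finset (Fin n)), (∀ σ ∈ S, σ.card = j + 1) ∧
      MinS j S ∧ (∀ K ∈ DD k j S, p < t K) ∧ Conn (born k t p' \ DD k j S) S ∧
      k - j + 2 ≤ S.card})
      {t | ∃ S : Finset (Finset (Fin n)), (∀ σ ∈ S, σ.card = j + 1) ∧
      MinS j S ∧ (∀ K ∈ DD k j S, p' < t K) ∧ S.Nonempty}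
  have hu2 := measureReal_union_le (μ := μ)
    {t | ¬ ∃ K C J, IsMj (complexAt k n t p) k j K C J}
      {t | ∃ S : Finset (Finset (Fin n)), (∀ σ ∈ S, σ.card = j + 1) ∧
      MinS j S ∧ (∀ K ∈ DD k j S, p < t K) ∧ Conn (born k t p' \ DD k j S) S ∧
      k - j + 2 ≤ S.card}
  refine htot.trans ?_
  refine add_le_add le_rfl (hu1.trans (add_le_add (hu2.trans (add_le_add ?_ ?_)) ?_))
  · exact b1.trans (add_le_add (add_le_add c1' (sub_le_sub_right c2 1)) c3)
  · exact b2.trans (add_le_add d3 e2)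
  · exact b3.trans e3

lemma err_tendsto (a b c' : ℝ) (c2 c3 δ2 δ3 : ℝ) (hc' : 0 < c') (hδ2 : 0 < δ2) (hδ3 : 0 < δ3) 
    (l η : ℕ → ℝ) (hl : Tendsto l atTop atTop) (hη : Tendsto η atTop (nhds 0)) :
    Tendsto (fun n => (1 / (c' * l n) + (1 / (1 - a * (b * η n)) - 1)
        + c2 * (l n * Real.exp (-(δ2 * l n))))
      + (Real.exp (-l n) + (c3 * Real.exp (-(δ3 * l n)) + 2 * Real.exp (-l n)))
      + (Real.exp (Real.exp (-l n)) - 1)) atTop (nhds 0) := by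
  have t1 : Tendsto (fun n => 1 / (c' * l n)) atTop (nhds 0) := by
    simp only [one_div]
    exact tendsto_inv_atTop_zero.comp (hl.const_mul_atTop hc')
  have t2 : Tendsto (fun n => 1 / (1 - a * (b * η n)) - 1) atTop (nhds 0) := by
    have h1 : Tendsto (fun n => 1 - a * (b * η n)) atTop (nhds (1 - a * (b * 0))) :=
      ((hη.const_mul b).const_mul a).const_sub 1
    have h2 := ((tendsto_const_nhds (x := (1 : ℝ))).div h1 (by simp)).sub_const 1
    simpa using h2
  have t3 : Tendsto (fun n => l n * Real.exp (-(δ2 * l n))) atTop (nhds 0) := by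
    have h := Real.tendsto_pow_mul_exp_neg_atTop_nhds_zero 1
    have h2 := h.comp (hl.const_mul_atTop hδ2)
    have h3 := h2.const_mul (1 / δ2)
    rw [mul_zero] at h3
    refine h3.congr fun n => ?_
    simp only [Function.comp, pow_one]
    field_simp
  have e : ∀ δ : ℝ, 0 < δ → Tendsto (fun n => Real.exp (-(δ * l n))) atTop (nhds 0) := fun δ hδ =>
    Real.tendsto_exp_neg_atTop_nhds_zero.comp (hl.const_mul_atTop hδ)
  have e1 : Tendsto (fun n => Real.exp (-l n)) atTop (nhds 0) :=
    Real.tendsto_exp_neg_atTop_nhds_zero.comp hl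
  have t4 : Tendsto (fun n => Real.exp (Real.exp (-l n)) - 1) atTop (nhds 0) := by
    have := ((Real.continuous_exp.tendsto 0).comp e1).sub_const 1
    simpa using this
  have := ((t1.add t2).add (t3.const_mul c2)).add
    (e1.add (((e δ3 hδ3).const_mul c3).add (e1.const_mul 2))) |>.add t4
  simpa using this

lemma log_tendsto : Tendsto (fun n : ℕ => Real.log n) atTop atTop :=
  Real.tendsto_log_atTop.comp tendsto_natCast_atTop_atTop

lemma eta_tendsto (j : ℕ) :
    Tendsto (fun n : ℕ => Real.log n / ((n : ℝ) - (j + 1))) atTop (nhds 0) := by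
  have h1 : Tendsto (fun n : ℕ => Real.log n / n) atTop (nhds 0) := by
    have := Real.isLittleO_log_id_atTop.tendsto_div_nhds_zero
    exact this.comp tendsto_natCast_atTop_atTop
  have h2 := h1.const_mul 2
  rw [mul_zero] at h2
  refine squeeze_zero' ?_ ?_ h2
  · filter_upwards [eventually_ge_atTop (2 * (j + 1))] with n hn
    have : ((2 * (j + 1) : ℕ) : ℝ) ≤ n := by exact_mod_cast hn
    push_cast at this
    exact div_nonneg (Real.log_natCast_nonneg n) (by linarith)
  · filter_upwards [eventually_ge_atTop (2 * (j + 1))] with n hn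
    have : ((2 * (j + 1) : ℕ) : ℝ) ≤ n := by exact_mod_cast hn
    push_cast at this
    have hj : (0 : ℝ) ≤ j := by positivity
    rw [mul_div_assoc', div_le_div_iff₀ (by linarith) (by linarith)]
    have := Real.log_natCast_nonneg n
    nlinarith

lemma W_eventually (A c ε : ℝ) (hε : 0 < ε) :
    ∀ᶠ x : ℝ in atTop, (A * x + 1) * c ≤ Real.exp (ε * x) := by
  have h1 : Tendsto (fun x : ℝ => x * Real.exp (-(ε * x))) atTop (nhds 0) := by
    have h := Real.tendsto_pow_mul_exp_neg_atTop_nhds_zero 1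
    have h2 := h.comp (tendsto_id.const_mul_atTop hε)
    have h3 := h2.const_mul (1 / ε)
    rw [mul_zero] at h3
    refine h3.congr fun n => ?_
    simp only [Function.comp, pow_one, id]
    field_simp
  have h2 : Tendsto (fun x : ℝ => Real.exp (-(ε * x))) atTop (nhds 0) :=
    Real.tendsto_exp_neg_atTop_nhds_zero.comp (tendsto_id.const_mul_atTop hε)
  have h3 := ((h1.const_mul A).add h2).mul_const c
  simp only [mul_zero, add_zero, zero_mul] at h3
  filter_upwards [h3.eventually_le_const (show (0 : ℝ) < 1 by norm_num)] with x hx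
  have he : Real.exp (-(ε * x)) * Real.exp (ε * x) = 1 := by rw [← Real.exp_add]; simp
  have := mul_le_mul_of_nonneg_right hx (Real.exp_pos (ε * x)).le
  calc (A * x + 1) * c = (A * (x * Real.exp (-(ε * x))) + Real.exp (-(ε * x))) * c * Real.exp (ε * x) := by
        linear_combination (-(A * x + 1) * c) * he
    _ ≤ _ := by linarith

end Final

/-- Corollary 5.8: whp `N_{G_p} = ∅` for all `p ≥ p_{M_j}` simultaneously, i.e. every
`j`-cocycle of `G_p` is generated by copies of `M_j^-`. -/
theorem statement19 (k j : ℕ) (hk : 2 ≤ k) (hj : 1 ≤ j) (hjk : j < k) :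
    Tendsto (fun n : ℕ => birthMeasure n {t : Finset (Fin n) → ℝ |
      ∀ p : ℝ, pMj k j n t ≤ p →
        ∀ f : Cochain (complexAt k n t p) j,
          f ∈ cocycles (complexAt k n t p) j →
            GeneratedByMjMinus (complexAt k n t p) k j f})
      atTop (nhds 1) := by
  change Tendsto (fun n : ℕ => birthMeasure n (Good k j n)) atTop (nhds 1)
  set L : ℝ := ((k - j : ℕ) : ℝ) with hL
  have hL1 : 1 ≤ L := by rw [hL]; exact_mod_cast (by omega : 1 ≤ k - j)
  have hj0 : (0 : ℝ) < (j : ℝ) + 1 := by positivity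
  -- constants
  obtain ⟨g, hg1, hg2⟩ : ∃ g : ℝ, (j + 1) / (L + 2) < g ∧ g < (j + 1) / (L + 1) :=
    exists_between (div_lt_div_of_pos_left hj0 (by linarith) (by linarith))
  have hg : 0 < g := lt_trans (by positivity) hg1
  rw [div_lt_iff₀ (by linarith)] at hg1
  rw [lt_div_iff₀ (by linarith)] at hg2
  set κ : ℝ := (((j + 2) * (k + 1).choose (j + 2) : ℕ) : ℝ) with hκ
  have hκp : 1 ≤ κ := by
    rw [hκ]; exact_mod_cast Nat.mul_pos (by omega) (Nat.choose_pos (by omega))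
  set Γ := κ * (j + 2) with hΓ
  set A := Real.exp 1 * Γ + (j + 2) with hA
  have hAp : 0 < A := by positivity
  obtain ⟨ε, hε, hε1, hε3⟩ : ∃ ε : ℝ, 0 < ε ∧ 2 * ε ≤ g / (2 * κ) ∧
      0 < (g - 2 * ε) * (L + 2) - (j + 1) := by
    refine ⟨min (g / (4 * κ)) ((g * (L + 2) - (j + 1)) / (4 * (L + 2))), ?_, ?_, ?_⟩
    · apply lt_min (by positivity)
      apply div_pos (by linarith) (by linarith)
    · have := min_le_left (g / (4 * κ)) ((g * (L + 2) - (j + 1)) / (4 * (L + 2)))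
      calc _ ≤ 2 * (g / (4 * κ)) := by linarith
        _ = _ := by field_simp; norm_num
    · have h := min_le_right (g / (4 * κ)) ((g * (L + 2) - (j + 1)) / (4 * (L + 2)))
      rw [le_div_iff₀ (by linarith)] at h
      nlinarith
  have hε2 : 2 * ε ≤ g := by
    refine hε1.trans (div_le_self hg.le (by linarith))
  obtain ⟨S0, hS0⟩ : ∃ S0 : ℕ, (2 * (j + 1) + 1) / (g / (2 * κ)) ≤ (S0 : ℝ) := exists_nat_ge _
  rw [div_le_iff₀ (by positivity)] at hS0
  set c' := g / ((k + 1).choose (j + 1) * (2 ^ (j + 1) * (j + 1).factorial)) with hc'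
  have hcp : 0 < c' := by
    have : (0 : ℝ) < (k + 1).choose (j + 1) := by exact_mod_cast Nat.choose_pos (by omega)
    rw [hc']; positivity
  have hη := eta_tendsto j
  have herr := err_tendsto ((L + 1) ^ 2) (g * L) c' ((j + 1) * g * Real.exp 2)
    (2 * Real.exp 1 * (S0 + 1)) ((L + 2) * g - (j + 1)) ((g - 2 * ε) * (L + 2) - (j + 1))
    hcp (by linarith) hε3 _ _ log_tendsto hη
  have hevη : ∀ a b : ℝ, 0 < b → ∀ᶠ n : ℕ in atTop,
      a * (Real.log n / ((n : ℝ) - (j + 1))) < b := by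
    intro a b hb
    have := hη.const_mul a
    rw [mul_zero] at this
    exact this.eventually_lt_const hb
  have hbound : ∀ᶠ n : ℕ in atTop, 1 ≤ (birthMeasure n).real (Good k j n) +
      ((1 / (c' * Real.log n) +
          (1 / (1 - (L + 1) ^ 2 * (g * L * (Real.log n / ((n : ℝ) - (j + 1))))) - 1) +
          (j + 1) * g * Real.exp 2 * (Real.log n *
            Real.exp (-(((L + 2) * g - (j + 1)) * Real.log n)))) +
        (Real.exp (-Real.log n) + (2 * Real.exp 1 * (S0 + 1) *
            Real.exp (-(((g - 2 * ε) * (L + 2) - (j + 1)) * Real.log n)) +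
          2 * Real.exp (-Real.log n))) +
        (Real.exp (Real.exp (-Real.log n)) - 1)) := by
    filter_upwards [eventually_ge_atTop (k + 2), eventually_ge_atTop (2 * (j + 1)),
      log_tendsto.eventually_ge_atTop 1,
      log_tendsto.eventually (W_eventually A (2 * (k + 1).choose (j + 1)) ε hε),
      hevη (g * L) 1 one_pos,
      hevη (g * L) (1 - (L + 1) * g / (j + 1)) (by
        rw [sub_pos, div_lt_one hj0]; linarith),
      hevη ((L + 2) ^ 2 * (g * L)) 1 one_pos,
      hevη ((S0 : ℝ) ^ 2 * (g * L)) 1 one_pos,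
      hevη (Γ * L) 1 one_pos] with n hn hn2 hl hW h1 h2 h3 h4 h5
    refine final_bound (S0 := S0) (Δ := ⌈A * Real.log n⌉₊) hj hjk hn hn2 hg hε hκ hΓ hA rfl hc'
      hε1 hε2 hS0 (Nat.le_ceil _) ?_ hl h1 ?_ ?_ ?_ h5.le
    · refine le_trans ?_ hW
      have : (⌈A * Real.log n⌉₊ : ℝ) ≤ A * Real.log n + 1 := (Nat.ceil_lt_add_one (by positivity)).le
      push_cast
      calc _ = (⌈A * Real.log n⌉₊ : ℝ) * (2 * (k + 1).choose (j + 1)) := by ring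
        _ ≤ _ := by gcongr
    · have h2' : (L + 1) * g / (j + 1) ≤ 1 - g * L * (Real.log n / ((n : ℝ) - (j + 1))) := by linarith
      rw [div_le_iff₀ hj0] at h2'
      linarith
    · rw [← mul_assoc]; exact h3
    · rw [← mul_assoc]; exact h4.le
  have hlow := herr.const_sub 1
  rw [sub_zero] at hlow
  have hreal : Tendsto (fun n : ℕ => (birthMeasure n).real (Good k j n)) atTop (nhds 1) := by
    refine tendsto_of_tendsto_of_tendsto_of_le_of_le' hlow tendsto_const_nhds ?_ ?_
    · filter_upwards [hbound] with n hn
      linarith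
    · exact Eventually.of_forall fun n => measureReal_le_one
  have := ENNReal.tendsto_ofReal hreal
  rw [ENNReal.ofReal_one] at this
  refine this.congr fun n => ?_
  rw [measureReal_def, ENNReal.ofReal_toReal (measure_ne_top _ _)]

end RSC
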